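/- Let ω ≥ 1 be an integer and δ ∈ (0,1/8) be fixed, and let η > 0. The series ζ_{E₀}(s) = Σ_{k≥1} E_{0,k}(s) converges absolutely and locally uniformly on the strip {s ∈ ℂ : 1 < Re(s) < 2}, and its sum extends to a meromorphic function on ℂ which is holomorphic at s = 0. Moreover, for fixed ω and δ, the derivative at 0 of this extension satisfies ζ_{E₀}'(0) = ζ(0)·log(ω) - ζ'(0) - ζ(0)·log(η) + o(1) as η → 0⁺. -/

import Mathlib

open MeasureTheory Filter

/-- The error integral `E_{0,k}(s)` for the model hyperbolic cone of angle `2π/ω` and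
boundary parameter `η`:
`E_{0,k}(s) = -(sin(πs)/π) · ∫_{k^{δ-1}/ω}^{∞} (k²ω²u² - 1/4)^{-s} · u/(u² + sinh(η)^{-2}) du`. -/
noncomputable def coneE0 (ω : ℕ) (η δ : ℝ) (k : ℕ) (s : ℂ) : ℂ :=
  -(Complex.sin ((Real.pi : ℂ) * s) / (Real.pi : ℂ)) *
    ∫ u in Set.Ioi ((k : ℝ) ^ (δ - 1) / ω),
      (((k : ℝ) ^ 2 * (ω : ℝ) ^ 2 * u ^ 2 - 1 / 4 : ℝ) : ℂ) ^ (-s) *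
        ((u / (u ^ 2 + (Real.sinh η)⁻¹ ^ 2) : ℝ) : ℂ)

/-!
Substituting `v = k² ω² u² - 1/4` turns `E_{0,k}(s)` into `-(sin (π s) / 2π)` times the integral of
`v ^ (-s) / (v + B_k)` over `(V_k, ∞)`, where `V_k = k ^ (2δ) - 1/4`, `B_k = b k² + 1/4` and
`b = ω² sinh(η)⁻²`. The integral over all of `(0, ∞)` is a Beta integral, so
`E_{0,k}(s) = -B_k ^ (-s) / 2 + (sin (π s) / 2π) ∫_{(0, V_k]} v ^ (-s) / (v + B_k) dv`,
the last integral being continued from `re s < 1` to the strip.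

Expanding `1 / (v + B_k)` in powers of `v / B_k` leaves a remainder that is summable in `k` on any
given disc once enough terms are taken, because `V_k / B_k = O(k ^ (2δ - 2))`. The expansion terms,
like `B_k ^ (-s)`, are asymptotic series in powers of `k`, so their sums over `k` are continued by
translates of the Riemann zeta function.

At `s = 0` the factor `sin (π s)` reduces the derivative of the second part to a sum of integrals of
`1 / (v + B_k)` over `(0, V_k]`, which is `O(1 / b)`. The first part contributes
`-½ d/ds (b ^ (-s) ζ(2s)) = ½ ζ(0) log b - ζ'(0)` up to `O(1 / b)`, and
`½ log b = log ω - log η + o(1)` while `b → ∞` as `η → 0⁺`.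
-/

open scoped Topology

/-! ### Riemann zeta and meromorphic continuation -/

theorem analyticAt_riemannZeta {z : ℂ} (hz : z ≠ 1) : AnalyticAt ℂ riemannZeta z :=
  Complex.analyticAt_iff_eventually_differentiableAt.2 <| by
    filter_upwards [isOpen_ne.mem_nhds hz] with s hs using differentiableAt_riemannZeta hs

theorem meromorphicAt_riemannZeta (z : ℂ) : MeromorphicAt riemannZeta z := by
  rcases eq_or_ne z 1 with rfl | hz
  · refine ⟨2, Complex.analyticAt_of_differentiable_on_punctured_nhds_of_continuousAt ?_ ?_⟩
    · filter_upwards [self_mem_nhdsWithin] with s hs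
      exact ((differentiableAt_id.sub_const _).pow 2).smul (differentiableAt_riemannZeta hs)
    · have hlin : Tendsto (fun s : ℂ ↦ s - 1) (𝓝[≠] 1) (𝓝 0) :=
        ((continuous_sub_right (1 : ℂ)).tendsto' 1 0 (sub_self 1)).mono_left nhdsWithin_le_nhds
      rw [continuousAt_iff_punctured_nhds]
      simpa [pow_two, mul_assoc] using hlin.mul riemannZeta_residue_one
  · exact (analyticAt_riemannZeta hz).meromorphicAt

theorem hasSum_riemannZeta {z : ℂ} (hz : 1 < z.re) :
    HasSum (fun k : ℕ ↦ ((k : ℂ) + 1) ^ (-z)) (riemannZeta z) := by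
  have hsum : Summable fun k : ℕ ↦ ((k : ℂ) + 1) ^ (-z) := by
    simpa [Complex.cpow_neg] using
      (summable_nat_add_iff 1).2 (Complex.summable_one_div_nat_cpow.2 hz)
  simpa [zeta_eq_tsum_one_div_nat_add_one_cpow hz, Complex.cpow_neg] using hsum.hasSum

section Meromorphic

variable {𝕜 E : Type*} [NontriviallyNormedField 𝕜] [NormedAddCommGroup E] [NormedSpace 𝕜 E]

theorem eventuallyEq_nhdsNE_of_isPreconnected {U : Set 𝕜} (hU : IsPreconnected U) {f g : 𝕜 → E}
    (hf : MeromorphicOn f U) (hg : MeromorphicOn g U) {x y : 𝕜} (hx : x ∈ U) (hy : y ∈ U)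
    (hfg : f =ᶠ[𝓝[≠] x] g) : f =ᶠ[𝓝[≠] y] g := by
  have hx_top : meromorphicOrderAt (f - g) x = ⊤ :=
    meromorphicOrderAt_eq_top_iff.2 (hfg.mono fun z hz ↦ sub_eq_zero.2 hz)
  have hy_top : meromorphicOrderAt (f - g) y = ⊤ := by
    by_contra hne
    exact (hf.sub hg).meromorphicOrderAt_ne_top_of_isPreconnected hU hy hx hne hx_top
  exact (meromorphicOrderAt_eq_top_iff.1 hy_top).mono fun z hz ↦ sub_eq_zero.1 hz

theorem exists_meromorphicNFOn_univ_of_monotone {U : ℕ → Set 𝕜} (hopen : ∀ n, IsOpen (U n))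
    (hconn : ∀ n, IsPreconnected (U n)) (hmono : Monotone U) (hcover : ⋃ n, U n = Set.univ)
    {x : 𝕜} (hx : ∀ n, x ∈ U n) {M : ℕ → 𝕜 → E} (hM : ∀ n, MeromorphicOn (M n) (U n))
    (hcompat : ∀ n m, M n =ᶠ[𝓝[≠] x] M m) :
    ∃ F : 𝕜 → E, MeromorphicNFOn F Set.univ ∧ ∀ n, ∀ s ∈ U n, F =ᶠ[𝓝[≠] s] M n := by
  let N : ℕ → 𝕜 → E := fun n ↦ toMeromorphicNFOn (M n) (U n)
  have hNF : ∀ n, MeromorphicNFOn (N n) (U n) := fun n ↦ meromorphicNFOn_toMeromorphicNFOn _ _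
  have hNM : ∀ n, ∀ s ∈ U n, N n =ᶠ[𝓝[≠] s] M n := fun n s hs ↦
    (hM n).toMeromorphicNFOn_eq_self_on_nhdsNE hs
  have hNN : ∀ n m, n ≤ m → Set.EqOn (N n) (N m) (U n) := fun n m hnm s hs ↦ by
    have hMM : M n =ᶠ[𝓝[≠] s] M m :=
      eventuallyEq_nhdsNE_of_isPreconnected (hconn n) (hM n) ((hM m).mono_set (hmono hnm)) (hx n) hs
        (hcompat n m)
    have hnhds := ((hNF n hs).eventuallyEq_nhdsNE_iff_eventuallyEq_nhds (hNF m (hmono hnm hs))).1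
      ((hNM n s hs).trans (hMM.trans (hNM m s (hmono hnm hs)).symm))
    exact hnhds.eq_of_nhds
  choose index hindex using fun s : 𝕜 ↦ Set.mem_iUnion.1 (hcover ▸ Set.mem_univ s)
  let F : 𝕜 → E := fun s ↦ N (index s) s
  have hF : ∀ n, Set.EqOn F (N n) (U n) := fun n s hs ↦ by
    rcases le_total n (index s) with h | h
    · exact (hNN n _ h hs).symm
    · exact hNN _ n h (hindex s)
  have hFN : ∀ n, ∀ s ∈ U n, F =ᶠ[𝓝 s] N n := fun n s hs ↦
    (hF n).eventuallyEq_of_mem ((hopen n).mem_nhds hs)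
  exact ⟨F, fun s _ ↦ (meromorphicNFAt_congr (hFN _ s (hindex s))).2 (hNF _ (hindex s)),
    fun n s hs ↦ ((hFN n s hs).filter_mono nhdsWithin_le_nhds).trans (hNM n s hs)⟩

end Meromorphic

/-- The series `∑ a k s` of functions converges on `D ∩ U` to a function that continues
meromorphically to `U`, with no singularity in `D`. -/
def SumsMeromorphically (a : ℕ → ℂ → ℂ) (D U : Set ℂ) : Prop :=
  ∃ M : ℂ → ℂ, MeromorphicOn M U ∧ ∀ s ∈ D ∩ U, AnalyticAt ℂ M s ∧ HasSum (a · s) (M s)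

namespace SumsMeromorphically

variable {a b : ℕ → ℂ → ℂ} {D D' U U' : Set ℂ}

theorem mono (h : SumsMeromorphically a D U) (hD : D' ⊆ D) (hU : U' ⊆ U) :
    SumsMeromorphically a D' U' := by
  obtain ⟨M, hM, hsum⟩ := h
  exact ⟨M, hM.mono_set hU, fun s hs ↦ hsum s ⟨hD hs.1, hU hs.2⟩⟩

theorem congr (h : SumsMeromorphically a D U) (hab : ∀ s ∈ D, ∀ k, b k s = a k s) :
    SumsMeromorphically b D U := by
  obtain ⟨M, hM, hsum⟩ := h
  exact ⟨M, hM, fun s hs ↦ by simpa only [hab s hs.1] using hsum s hs⟩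

theorem add (ha : SumsMeromorphically a D U) (hb : SumsMeromorphically b D U) :
    SumsMeromorphically (fun k s ↦ a k s + b k s) D U := by
  obtain ⟨M, hM, hMsum⟩ := ha
  obtain ⟨N, hN, hNsum⟩ := hb
  exact ⟨M + N, hM.add hN, fun s hs ↦
    ⟨(hMsum s hs).1.add (hNsum s hs).1, (hMsum s hs).2.add (hNsum s hs).2⟩⟩

theorem mul_left (h : SumsMeromorphically a D U) {c : ℂ → ℂ} (hc : Differentiable ℂ c) :
    SumsMeromorphically (fun k s ↦ c s * a k s) D U := by
  obtain ⟨M, hM, hsum⟩ := h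
  exact ⟨c * M, fun s hs ↦ (hc.analyticAt s).meromorphicAt.mul (hM s hs), fun s hs ↦
    ⟨(hc.analyticAt s).mul (hsum s hs).1, (hsum s hs).2.mul_left (c s)⟩⟩

theorem finset_sum {ι : Type*} {t : Finset ι} {f : ι → ℕ → ℂ → ℂ}
    (h : ∀ i ∈ t, SumsMeromorphically (f i) D U) :
    SumsMeromorphically (fun k s ↦ ∑ i ∈ t, f i k s) D U := by
  classical
  induction t using Finset.induction_on with
  | empty =>
    exact ⟨0, MeromorphicOn.const 0, fun s _ ↦ ⟨analyticAt_const, by simp⟩⟩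
  | insert i t hi ih =>
    refine ((h i (t.mem_insert_self i)).add
      (ih fun j hj ↦ h j (Finset.mem_insert_of_mem hj))).congr fun s _ k ↦ ?_
    rw [Finset.sum_insert hi]

theorem of_norm_le {u : ℕ → ℝ} (hu : Summable u) (hU : IsOpen U)
    (hdiff : ∀ k, DifferentiableOn ℂ (a k) U) (hle : ∀ k, ∀ s ∈ U, ‖a k s‖ ≤ u k) :
    SumsMeromorphically a Set.univ U := by
  have hM : DifferentiableOn ℂ (fun s ↦ ∑' k, a k s) U :=
    Complex.differentiableOn_tsum_of_summable_norm hu hdiff hU hle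
  have han : ∀ s ∈ U, AnalyticAt ℂ (fun s ↦ ∑' k, a k s) s := fun s hs ↦
    hM.analyticAt (hU.mem_nhds hs)
  exact ⟨_, fun s hs ↦ (han s hs).meromorphicAt, fun s hs ↦
    ⟨han s hs.2, (hu.of_norm_bounded fun k ↦ hle k s hs.2).hasSum⟩⟩

theorem of_forall_ball (hD : IsOpen D)
    (h : ∀ R : ℝ, SumsMeromorphically a D (Metric.ball 0 R)) :
    SumsMeromorphically a D Set.univ := by
  rcases D.eq_empty_or_nonempty with rfl | ⟨x, hxD⟩
  · exact ⟨0, MeromorphicOn.const 0, by simp⟩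
  let U : ℕ → Set ℂ := fun n ↦ Metric.ball 0 (‖x‖ + 1 + n)
  have hmono : Monotone U := fun m n hmn ↦ Metric.ball_subset_ball (by gcongr)
  have hx : ∀ n, x ∈ U n := fun n ↦ by
    rw [mem_ball_zero_iff]; linarith [(n.cast_nonneg : (0 : ℝ) ≤ n)]
  have hcover : ⋃ n, U n = Set.univ := Set.eq_univ_of_forall fun s ↦ by
    obtain ⟨n, hn⟩ := exists_nat_gt ‖s‖
    exact Set.mem_iUnion.2 ⟨n, by rw [mem_ball_zero_iff]; linarith [norm_nonneg x]⟩
  choose M hM hsum using fun n : ℕ ↦ h (‖x‖ + 1 + n)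
  have hcompat : ∀ n m, M n =ᶠ[𝓝[≠] x] M m := fun n m ↦ by
    refine Filter.EventuallyEq.filter_mono ?_ nhdsWithin_le_nhds
    filter_upwards [hD.mem_nhds hxD, Metric.isOpen_ball.mem_nhds (hx n),
      Metric.isOpen_ball.mem_nhds (hx m)] with s hsD hsn hsm
    exact (hsum n s ⟨hsD, hsn⟩).2.unique (hsum m s ⟨hsD, hsm⟩).2
  obtain ⟨F, hF, hFM⟩ := exists_meromorphicNFOn_univ_of_monotone (fun _ ↦ Metric.isOpen_ball)
    (fun _ ↦ (convex_ball _ _).isPreconnected) hmono hcover hx hM hcompat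
  refine ⟨F, hF.meromorphicOn, fun s hs ↦ ?_⟩
  obtain ⟨n, hn⟩ := Set.mem_iUnion.1 (hcover ▸ hs.2)
  obtain ⟨han, hsumn⟩ := hsum n s ⟨hs.1, hn⟩
  have heq : F =ᶠ[𝓝 s] M n :=
    ((hF hs.2).eventuallyEq_nhdsNE_iff_eventuallyEq_nhds han.meromorphicNFAt).1 (hFM n s hn)
  exact ⟨han.congr heq.symm, heq.eq_of_nhds ▸ hsumn⟩

end SumsMeromorphically

theorem sumsMeromorphically_cpow (α β : ℂ) :
    SumsMeromorphically (fun k s ↦ ((k : ℂ) + 1) ^ (-(α * s + β))) {s | 1 < (α * s + β).re}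
      Set.univ := by
  have haff : ∀ s, AnalyticAt ℂ (fun s : ℂ ↦ α * s + β) s := fun s ↦ by fun_prop
  refine ⟨fun s ↦ riemannZeta (α * s + β), fun s _ ↦
    (meromorphicAt_riemannZeta _).comp_analyticAt (haff s),
    fun s ⟨hs, _⟩ ↦ ⟨?_, hasSum_riemannZeta hs⟩⟩
  have hne : α * s + β ≠ 1 := fun h ↦ by rw [Set.mem_ofPred_eq, h] at hs; simp at hs
  exact AnalyticAt.comp (g := riemannZeta) (analyticAt_riemannZeta hne) (haff s)

/-! ### Binomial remainders and expansions in powers of `k + 1` -/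

theorem succ_mul_choose_succ (w : ℂ) (n : ℕ) :
    ((n : ℂ) + 1) * Ring.choose w (n + 1) = w * Ring.choose (w - 1) n := by
  simpa using Ring.choose_add_smul_choose (w - 1) n 1

theorem differentiable_choose (n : ℕ) : Differentiable ℂ fun w : ℂ ↦ Ring.choose w n := by
  induction n with
  | zero => simp
  | succ n ih =>
    have hrec : (fun w : ℂ ↦ Ring.choose w (n + 1)) =
        fun w ↦ w * Ring.choose (w - 1) n / ((n : ℂ) + 1) := by
      funext w
      rw [← succ_mul_choose_succ, mul_div_cancel_left₀ _ n.cast_add_one_ne_zero]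
    rw [hrec]
    exact (differentiable_id.mul (ih.comp (differentiable_id.sub_const 1))).div_const _

/-- The error in approximating `(1 + y) ^ w` by the first `n` terms of its binomial series. -/
noncomputable def binomialRemainder (n : ℕ) (w y : ℂ) : ℂ :=
  (1 + y) ^ w - ∑ i ∈ Finset.range n, Ring.choose w i * y ^ i

theorem hasDerivAt_binomialRemainder_succ (n : ℕ) (w : ℂ) {y : ℂ}
    (hy : 1 + y ∈ Complex.slitPlane) :
    HasDerivAt (binomialRemainder (n + 1) w) (w * binomialRemainder n (w - 1) y) y := by
  have hpow : HasDerivAt (fun y : ℂ ↦ (1 + y) ^ w) (w * (1 + y) ^ (w - 1)) y := by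
    simpa using ((hasDerivAt_id y).const_add 1).cpow_const (c := w) hy
  have hpoly : HasDerivAt (fun y : ℂ ↦ ∑ i ∈ Finset.range (n + 1), Ring.choose w i * y ^ i)
      (∑ i ∈ Finset.range (n + 1), Ring.choose w i * (i * y ^ (i - 1))) y :=
    HasDerivAt.fun_sum fun i _ ↦ (hasDerivAt_pow i y).const_mul _
  convert! hpow.sub hpoly using 1
  rw [binomialRemainder, mul_sub, Finset.mul_sum, Finset.sum_range_succ']
  congr 1
  simp only [Nat.cast_zero, zero_mul, mul_zero, add_zero, add_tsub_cancel_right, Nat.cast_add,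
    Nat.cast_one]
  refine Finset.sum_congr rfl fun i _ ↦ ?_
  rw [← mul_assoc, ← succ_mul_choose_succ]
  ring

theorem binomialRemainder_succ_zero (n : ℕ) (w : ℂ) : binomialRemainder (n + 1) w 0 = 0 := by
  simp [binomialRemainder, Finset.sum_range_succ']

theorem one_add_mul_pos {ε t : ℝ} (hε : -1 < ε) (ht : t ∈ Set.Icc (0 : ℝ) 1) : 0 < 1 + ε * t := by
  rcases ht.2.eq_or_lt with rfl | ht1
  · linarith
  · nlinarith [mul_nonneg (neg_lt_iff_pos_add.1 hε).le ht.1]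

theorem one_add_mul_mem_slitPlane {ε t : ℝ} (hε : -1 < ε) (ht : t ∈ Set.Icc (0 : ℝ) 1) :
    1 + (ε : ℂ) * t ∈ Complex.slitPlane :=
  Or.inl (by simpa using one_add_mul_pos hε ht)

theorem hasDerivAt_binomialRemainder_succ_ofReal_mul {ε t : ℝ} (hε : -1 < ε) (n : ℕ) (w : ℂ)
    (ht : t ∈ Set.Icc (0 : ℝ) 1) :
    HasDerivAt (fun r : ℝ ↦ binomialRemainder (n + 1) w (ε * r))
      (w * binomialRemainder n (w - 1) (ε * t) * ε) t := by
  have hlin : HasDerivAt (fun r : ℝ ↦ (ε : ℂ) * r) ε t := by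
    simpa using (hasDerivAt_id t).ofReal_comp.const_mul (ε : ℂ)
  exact (hasDerivAt_binomialRemainder_succ n w (one_add_mul_mem_slitPlane hε ht)).comp t hlin

theorem exists_norm_binomialRemainder_le {ε : ℝ} (hε : -1 < ε) (n : ℕ) (R : ℝ) :
    ∃ C : ℝ, ∀ w ∈ Metric.closedBall (0 : ℂ) R, ∀ t ∈ Set.Icc (0 : ℝ) 1,
      ‖binomialRemainder n w (ε * t)‖ ≤ C * t ^ n := by
  induction n generalizing R with
  | zero =>
    have hcont : ContinuousOn (fun p : ℂ × ℝ ↦ (1 + (ε : ℂ) * p.2) ^ p.1)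
        (Metric.closedBall 0 R ×ˢ Set.Icc 0 1) :=
      ContinuousOn.cpow (by fun_prop) (by fun_prop) fun p hp ↦
        one_add_mul_mem_slitPlane hε hp.2
    obtain ⟨C, hC⟩ :=
      ((isCompact_closedBall 0 R).prod isCompact_Icc).exists_bound_of_continuousOn hcont
    exact ⟨C, fun w hw t ht ↦ by simpa [binomialRemainder] using hC (w, t) ⟨hw, ht⟩⟩
  | succ n ih =>
    obtain ⟨C, hC⟩ := ih (R + 1)
    refine ⟨R * |ε| * C, fun w hw t ht ↦ ?_⟩
    rw [mem_closedBall_zero_iff] at hw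
    have hR : 0 ≤ R := (norm_nonneg w).trans hw
    have hw' : w - 1 ∈ Metric.closedBall (0 : ℂ) (R + 1) := by
      rw [mem_closedBall_zero_iff]
      exact (norm_sub_le _ _).trans (by simpa using hw)
    have hderiv : ∀ r ∈ Set.Icc 0 t, HasDerivWithinAt
        (fun r : ℝ ↦ binomialRemainder (n + 1) w (ε * r))
        (w * binomialRemainder n (w - 1) (ε * r) * ε) (Set.Icc 0 t) r := fun r hr ↦
      (hasDerivAt_binomialRemainder_succ_ofReal_mul hε n w
        ⟨hr.1, hr.2.trans ht.2⟩).hasDerivWithinAt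
    have hbound : ∀ r ∈ Set.Icc 0 t,
        ‖w * binomialRemainder n (w - 1) (ε * r) * ε‖ ≤ R * |ε| * C * t ^ n := fun r hr ↦ by
      have hrem := hC _ hw' r ⟨hr.1, hr.2.trans ht.2⟩
      have hC0 : 0 ≤ C := by simpa using (norm_nonneg _).trans (hC _ hw' 1 (by simp))
      calc ‖w * binomialRemainder n (w - 1) (ε * r) * ε‖
          = ‖w‖ * ‖binomialRemainder n (w - 1) (ε * r)‖ * |ε| := by simp
        _ ≤ R * (C * t ^ n) * |ε| := by
          gcongr
          exact hrem.trans (by gcongr; exacts [hr.1, hr.2])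
        _ = R * |ε| * C * t ^ n := by ring
    have hmean := (convex_Icc 0 t).norm_image_sub_le_of_norm_hasDerivWithin_le hderiv hbound
      (Set.left_mem_Icc.2 ht.1) (Set.right_mem_Icc.2 ht.1)
    simpa [binomialRemainder_succ_zero, abs_of_nonneg ht.1, pow_succ, mul_assoc] using hmean

theorem natCast_add_one_rpow_mem_Icc (k : ℕ) {θ : ℝ} (hθ : 0 ≤ θ) :
    ((k : ℝ) + 1) ^ (-θ) ∈ Set.Icc (0 : ℝ) 1 :=
  ⟨by positivity, Real.rpow_le_one_of_one_le_of_nonpos (by simp) (by simpa)⟩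

theorem norm_natCast_add_one_cpow (k : ℕ) (z : ℂ) : ‖((k : ℂ) + 1) ^ z‖ = ((k : ℝ) + 1) ^ z.re := by
  exact_mod_cast Complex.norm_cpow_eq_rpow_re_of_pos (k.cast_add_one_pos : (0 : ℝ) < k + 1) z

theorem natCast_add_one_rpow_neg_pow (k : ℕ) (θ : ℝ) (m : ℕ) :
    (((k : ℝ) + 1) ^ (-θ)) ^ m = ((k : ℝ) + 1) ^ (-(θ * m)) := by
  rw [← Real.rpow_mul_natCast (by positivity), neg_mul]

theorem ofReal_natCast_add_one_rpow (k : ℕ) (x : ℝ) :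
    (((((k : ℝ) + 1) ^ x : ℝ)) : ℂ) = ((k : ℂ) + 1) ^ (x : ℂ) := by
  rw [Complex.ofReal_cpow (by positivity)]
  push_cast
  rfl

theorem natCast_add_one_cpow_neg_mul (k : ℕ) (θ : ℝ) (m : ℕ) :
    ((k : ℂ) + 1) ^ (-((θ * m : ℝ) : ℂ)) = ((((k : ℝ) + 1) ^ (-θ) : ℝ) : ℂ) ^ m := by
  rw [← Complex.ofReal_pow, natCast_add_one_rpow_neg_pow, ofReal_natCast_add_one_rpow,
    Complex.ofReal_neg]

theorem summable_natCast_add_one_rpow {p : ℝ} (hp : p < -1) :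
    Summable fun k : ℕ ↦ ((k : ℝ) + 1) ^ p := by
  simpa using (summable_nat_add_iff 1).2 (Real.summable_nat_rpow.2 hp)

/-- `p k s` is a finite combination of powers `(k + 1) ^ (-β)` with real exponents `β ≥ β₀` and
entire coefficients in `s`. -/
def IsPowerSum (p : ℕ → ℂ → ℂ) (β₀ : ℝ) : Prop :=
  ∃ (ι : Type) (_ : Fintype ι) (c : ι → ℂ → ℂ) (β : ι → ℝ), (∀ i, Differentiable ℂ (c i)) ∧
    (∀ i, β₀ ≤ β i) ∧ ∀ k s, p k s = ∑ i, c i s * ((k : ℂ) + 1) ^ (-(β i : ℂ))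

namespace IsPowerSum

variable {p q : ℕ → ℂ → ℂ} {β₀ β₁ : ℝ}

theorem mono (hp : IsPowerSum p β₁) (h : β₀ ≤ β₁) : IsPowerSum p β₀ := by
  obtain ⟨ι, hι, c, β, hc, hβ, hp⟩ := hp
  exact ⟨ι, hι, c, β, hc, fun i ↦ h.trans (hβ i), hp⟩

theorem one : IsPowerSum (fun _ _ ↦ 1) 0 :=
  ⟨Unit, inferInstance, fun _ _ ↦ 1, fun _ ↦ 0, fun _ ↦ differentiable_const 1, fun _ ↦ le_rfl,
    by simp⟩

theorem add (hp : IsPowerSum p β₀) (hq : IsPowerSum q β₀) :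
    IsPowerSum (fun k s ↦ p k s + q k s) β₀ := by
  obtain ⟨ι, _, c, β, hc, hβ, hp⟩ := hp
  obtain ⟨κ, _, d, γ, hd, hγ, hq⟩ := hq
  exact ⟨ι ⊕ κ, inferInstance, Sum.elim c d, Sum.elim β γ, Sum.rec hc hd, Sum.rec hβ hγ,
    fun k s ↦ by simp [hp, hq]⟩

theorem mul (hp : IsPowerSum p β₀) (hq : IsPowerSum q β₁) :
    IsPowerSum (fun k s ↦ p k s * q k s) (β₀ + β₁) := by
  obtain ⟨ι, _, c, β, hc, hβ, hp⟩ := hp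
  obtain ⟨κ, _, d, γ, hd, hγ, hq⟩ := hq
  refine ⟨ι × κ, inferInstance, fun i s ↦ c i.1 s * d i.2 s, fun i ↦ β i.1 + γ i.2,
    fun i ↦ (hc i.1).mul (hd i.2), fun i ↦ add_le_add (hβ i.1) (hγ i.2), fun k s ↦ ?_⟩
  simp only [hp, hq]
  rw [Finset.sum_mul_sum, Fintype.sum_prod_type]
  refine Finset.sum_congr rfl fun i _ ↦ Finset.sum_congr rfl fun j _ ↦ ?_
  rw [Complex.ofReal_add, neg_add, Complex.cpow_add _ _ k.cast_add_one_ne_zero]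
  ring

theorem exists_norm_le (hp : IsPowerSum p β₀) (R : ℝ) :
    ∃ C : ℝ, ∀ k, ∀ s ∈ Metric.closedBall (0 : ℂ) R, ‖p k s‖ ≤ C * ((k : ℝ) + 1) ^ (-β₀) := by
  obtain ⟨ι, _, c, β, hc, hβ, hp⟩ := hp
  choose C hC using fun i ↦ (isCompact_closedBall (0 : ℂ) R).exists_bound_of_continuousOn
    (hc i).continuous.continuousOn
  refine ⟨∑ i, C i, fun k s hs ↦ ?_⟩
  rw [hp, Finset.sum_mul]
  refine norm_sum_le_of_le _ fun i _ ↦ ?_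
  have hpow : ‖((k : ℂ) + 1) ^ (-(β i : ℂ))‖ ≤ ((k : ℝ) + 1) ^ (-β₀) := by
    rw [norm_natCast_add_one_cpow]
    exact Real.rpow_le_rpow_of_exponent_le (by simp) (by simpa using hβ i)
  rw [norm_mul]
  exact mul_le_mul (hC i s hs) hpow (norm_nonneg _) ((norm_nonneg _).trans (hC i s hs))

theorem differentiable (hp : IsPowerSum p β₀) (k : ℕ) : Differentiable ℂ (p k) := by
  obtain ⟨ι, _, c, β, hc, -, hp⟩ := hp
  rw [show p k = fun s ↦ ∑ i, c i s * ((k : ℂ) + 1) ^ (-(β i : ℂ)) from funext (hp k)]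
  exact Differentiable.fun_sum fun i _ ↦ (hc i).mul_const _

theorem sumsMeromorphically (hp : IsPowerSum p β₀) (α β : ℝ) :
    SumsMeromorphically (fun k s ↦ ((k : ℂ) + 1) ^ (-(α * s + β : ℂ)) * p k s)
      {s | 1 < α * s.re + β + β₀} Set.univ := by
  obtain ⟨ι, _, c, γ, hc, hγ, hp⟩ := hp
  have hterm : ∀ i, SumsMeromorphically
      (fun k s ↦ c i s * ((k : ℂ) + 1) ^ (-(α * s + (β + γ i) : ℂ)))
      {s | 1 < α * s.re + β + β₀} Set.univ := fun i ↦
    ((sumsMeromorphically_cpow α (β + γ i)).mul_left (hc i)).mono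
      (fun s (hs : 1 < α * s.re + β + β₀) ↦ by
        simp only [Set.mem_ofPred_eq, Complex.add_re, Complex.re_ofReal_mul, Complex.ofReal_re]
        linarith [hγ i]) subset_rfl
  refine (SumsMeromorphically.finset_sum (t := .univ) fun i _ ↦ hterm i).congr fun s _ k ↦ ?_
  rw [hp, Finset.mul_sum]
  refine Finset.sum_congr rfl fun i _ ↦ ?_
  rw [mul_left_comm, ← Complex.cpow_add _ _ k.cast_add_one_ne_zero]
  ring_nf

end IsPowerSum

theorem sumsMeromorphically_ball_cpow_mul {a : ℕ → ℂ → ℂ} {α β R C : ℝ}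
    (ha : ∀ k, Differentiable ℂ (a k))
    (hC : ∀ k, ∀ s ∈ Metric.closedBall (0 : ℂ) R,
      ‖a k s‖ ≤ C * ((k : ℝ) + 1) ^ (-(|α| * R - β + 2))) :
    SumsMeromorphically (fun k s ↦ ((k : ℂ) + 1) ^ (-(α * s + β : ℂ)) * a k s) Set.univ
      (Metric.ball 0 R) := by
  refine .of_norm_le ((summable_natCast_add_one_rpow (p := -2) (by norm_num)).mul_left C)
    Metric.isOpen_ball (fun k ↦ ?_) fun k s hs ↦ ?_
  · have hpow : Differentiable ℂ fun s : ℂ ↦ ((k : ℂ) + 1) ^ (-(α * s + β : ℂ)) :=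
      Differentiable.const_cpow (by fun_prop) (.inl k.cast_add_one_ne_zero)
    exact (hpow.mul (ha k)).differentiableOn
  · have hre : -(α * s.re) ≤ |α| * R := by
      have hs' : |s.re| ≤ R := (Complex.abs_re_le_norm s).trans (mem_ball_zero_iff.1 hs).le
      calc -(α * s.re) ≤ |α * s.re| := neg_le_abs _
        _ = |α| * |s.re| := abs_mul _ _
        _ ≤ |α| * R := by gcongr
    calc ‖((k : ℂ) + 1) ^ (-(α * s + β : ℂ)) * a k s‖
        ≤ ((k : ℝ) + 1) ^ (|α| * R - β) * (C * ((k : ℝ) + 1) ^ (-(|α| * R - β + 2))) := by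
          rw [norm_mul, norm_natCast_add_one_cpow]
          refine mul_le_mul ?_ (hC k s (Metric.ball_subset_closedBall hs)) (norm_nonneg _)
            (by positivity)
          refine Real.rpow_le_rpow_of_exponent_le (by simp) ?_
          simp only [Complex.neg_re, Complex.add_re, Complex.re_ofReal_mul, Complex.ofReal_re]
          linarith
      _ = C * ((k : ℝ) + 1) ^ (-2 : ℝ) := by
          rw [mul_left_comm, ← Real.rpow_add (by positivity)]
          ring_nf

/-- `a k s` has an asymptotic expansion as `k → ∞` in real powers `(k + 1) ^ (-β)` with `β ≥ β₀`
and entire coefficients in `s`, uniformly for bounded `s`. -/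
structure HasPowerExpansion (a : ℕ → ℂ → ℂ) (β₀ : ℝ) : Prop where
  differentiable : ∀ k, Differentiable ℂ (a k)
  approx : ∀ R N : ℝ, ∃ p, IsPowerSum p β₀ ∧ ∃ C : ℝ, ∀ k, ∀ s ∈ Metric.closedBall (0 : ℂ) R,
    ‖a k s - p k s‖ ≤ C * ((k : ℝ) + 1) ^ (-N)

namespace HasPowerExpansion

variable {a b : ℕ → ℂ → ℂ} {β₀ β₁ : ℝ}

theorem exists_norm_le (ha : HasPowerExpansion a β₀) (R : ℝ) :
    ∃ C : ℝ, ∀ k, ∀ s ∈ Metric.closedBall (0 : ℂ) R, ‖a k s‖ ≤ C * ((k : ℝ) + 1) ^ (-β₀) := by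
  obtain ⟨p, hp, C, hC⟩ := ha.approx R β₀
  obtain ⟨C', hC'⟩ := hp.exists_norm_le R
  refine ⟨C + C', fun k s hs ↦ ?_⟩
  calc ‖a k s‖ ≤ ‖a k s - p k s‖ + ‖p k s‖ := norm_le_norm_sub_add _ _
    _ ≤ C * ((k : ℝ) + 1) ^ (-β₀) + C' * ((k : ℝ) + 1) ^ (-β₀) :=
      add_le_add (hC k s hs) (hC' k s hs)
    _ = (C + C') * ((k : ℝ) + 1) ^ (-β₀) := (add_mul _ _ _).symm

theorem one_add (ha : HasPowerExpansion a β₀) (hβ₀ : 0 ≤ β₀) :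
    HasPowerExpansion (fun k s ↦ 1 + a k s) 0 where
  differentiable k := (ha.differentiable k).const_add 1
  approx R N := by
    obtain ⟨p, hp, C, hC⟩ := ha.approx R N
    exact ⟨_, IsPowerSum.one.add (hp.mono hβ₀), C, by simpa using hC⟩

theorem mul (ha : HasPowerExpansion a β₀) (hb : HasPowerExpansion b β₁) :
    HasPowerExpansion (fun k s ↦ a k s * b k s) (β₀ + β₁) where
  differentiable k := (ha.differentiable k).mul (hb.differentiable k)
  approx R N := by
    obtain ⟨A, hA⟩ := ha.exists_norm_le R
    obtain ⟨q, hq, C, hC⟩ := hb.approx R (N - β₀)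
    obtain ⟨p, hp, C', hC'⟩ := ha.approx R (N - β₁)
    obtain ⟨B, hB⟩ := hq.exists_norm_le R
    refine ⟨_, hp.mul hq, A * C + C' * B, fun k s hs ↦ ?_⟩
    have hpow : ∀ β : ℝ, ((k : ℝ) + 1) ^ (-β) * ((k : ℝ) + 1) ^ (-(N - β)) =
        ((k : ℝ) + 1) ^ (-N) := fun β ↦ by
      rw [← Real.rpow_add (by positivity)]
      ring_nf
    calc ‖a k s * b k s - p k s * q k s‖
        = ‖a k s * (b k s - q k s) + (a k s - p k s) * q k s‖ := by ring_nf
      _ ≤ ‖a k s‖ * ‖b k s - q k s‖ + ‖a k s - p k s‖ * ‖q k s‖ := by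
        simpa only [norm_mul] using norm_add_le (a k s * (b k s - q k s)) ((a k s - p k s) * q k s)
      _ ≤ A * ((k : ℝ) + 1) ^ (-β₀) * (C * ((k : ℝ) + 1) ^ (-(N - β₀))) +
          C' * ((k : ℝ) + 1) ^ (-(N - β₁)) * (B * ((k : ℝ) + 1) ^ (-β₁)) :=
        add_le_add
          (mul_le_mul (hA k s hs) (hC k s hs) (norm_nonneg _) ((norm_nonneg _).trans (hA k s hs)))
          (mul_le_mul (hC' k s hs) (hB k s hs) (norm_nonneg _) ((norm_nonneg _).trans (hC' k s hs)))
      _ = (A * C + C' * B) * ((k : ℝ) + 1) ^ (-N) := by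
        rw [add_mul]
        nth_rewrite 1 [← hpow β₀]
        rw [← hpow β₁]
        ring

theorem sumsMeromorphically (ha : HasPowerExpansion a β₀) (α β : ℝ) :
    SumsMeromorphically (fun k s ↦ ((k : ℂ) + 1) ^ (-(α * s + β : ℂ)) * a k s)
      {s | 1 < α * s.re + β + β₀} Set.univ := by
  refine .of_forall_ball (isOpen_lt (by fun_prop) (by fun_prop)) fun R ↦ ?_
  obtain ⟨p, hp, C, hC⟩ := ha.approx R (|α| * R - β + 2)
  have hrem := sumsMeromorphically_ball_cpow_mul
    (fun k ↦ (ha.differentiable k).sub (hp.differentiable k)) hC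
  refine (((hp.sumsMeromorphically α β).mono subset_rfl (Set.subset_univ _)).add
    (hrem.mono (Set.subset_univ _) subset_rfl)).congr fun s _ k ↦ ?_
  simp only [Pi.sub_apply]
  ring

end HasPowerExpansion

theorem hasPowerExpansion_one_add_cpow_sub_one {θ ε : ℝ} (hθ : 0 < θ) (hε : -1 < ε) {w : ℂ → ℂ}
    (hw : Differentiable ℂ w) :
    HasPowerExpansion (fun k s ↦ ((1 + ε * ((k : ℝ) + 1) ^ (-θ) : ℝ) : ℂ) ^ w s - 1) θ where
  differentiable k := by
    have hne : ((1 + ε * ((k : ℝ) + 1) ^ (-θ) : ℝ) : ℂ) ≠ 0 :=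
      Complex.ofReal_ne_zero.2 (one_add_mul_pos hε (natCast_add_one_rpow_mem_Icc k hθ.le)).ne'
    exact (hw.const_cpow (.inl hne)).sub_const 1
  approx R N := by
    obtain ⟨W, hW⟩ := (isCompact_closedBall (0 : ℂ) R).exists_bound_of_continuousOn
      hw.continuous.continuousOn
    obtain ⟨n, hn⟩ := exists_nat_ge (N / θ)
    rw [div_le_iff₀ hθ] at hn
    obtain ⟨C, hC⟩ := exists_norm_binomialRemainder_le hε (n + 1) W
    refine ⟨fun k s ↦ ∑ i : Fin n, Ring.choose (w s) (i + 1) * (ε : ℂ) ^ (i + 1 : ℕ) *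
        ((k : ℂ) + 1) ^ (-((θ * (i + 1 : ℕ) : ℝ) : ℂ)),
      ⟨Fin n, inferInstance, _, fun i ↦ θ * (i + 1 : ℕ),
        fun i ↦ ((differentiable_choose _).comp hw).mul_const _,
        fun i ↦ le_mul_of_one_le_right hθ.le (by simp), fun _ _ ↦ rfl⟩, C, fun k s hs ↦ ?_⟩
    set t : ℝ := ((k : ℝ) + 1) ^ (-θ) with ht
    have hrem := hC (w s) (mem_closedBall_zero_iff.2 (hW s hs)) t
      (natCast_add_one_rpow_mem_Icc k hθ.le)
    have hC0 : 0 ≤ C := nonneg_of_mul_nonneg_left ((norm_nonneg _).trans hrem) (by positivity)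
    calc _ = ‖binomialRemainder (n + 1) (w s) (ε * t)‖ := by
          simp only [natCast_add_one_cpow_neg_mul, ← ht, binomialRemainder, Finset.sum_range_succ',
            Finset.sum_range, mul_pow]
          simp [mul_assoc, sub_sub, add_comm]
      _ ≤ C * t ^ (n + 1) := hrem
      _ ≤ C * ((k : ℝ) + 1) ^ (-N) := by
          rw [natCast_add_one_rpow_neg_pow]
          gcongr
          · simp
          · push_cast; linarith

/-! ### Truncated Mellin transforms of `v ↦ 1 / (v + B)` -/

/-- The integrand `v ^ (z - 1) / (v + B)` of the Mellin transform of `1 / (v + B)`. -/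
noncomputable def mellinKernel (B : ℝ) (z : ℂ) (v : ℝ) : ℂ :=
  (v : ℂ) ^ (z - 1) / ((v + B : ℝ) : ℂ)

/-- The Mellin transform of the restriction of `1 / (v + B)` to `(0, V]`. -/
noncomputable def truncatedMellin (V B : ℝ) (z : ℂ) : ℂ :=
  ∫ v in Set.Ioc 0 V, mellinKernel B z v

section Mellin

variable {V B v : ℝ} {z : ℂ}

theorem mellinKernel_recurrence (hB : 0 < B) (hv : 0 < v) :
    mellinKernel B z v = (B : ℂ)⁻¹ * ((v : ℂ) ^ (z - 1) - mellinKernel B (z + 1) v) := by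
  have hv' : (v : ℂ) ≠ 0 := Complex.ofReal_ne_zero.2 hv.ne'
  have hB' : (B : ℂ) ≠ 0 := Complex.ofReal_ne_zero.2 hB.ne'
  have hvB : (v : ℂ) + B ≠ 0 := by exact_mod_cast (add_pos hv hB).ne'
  rw [mellinKernel, mellinKernel, add_sub_right_comm, Complex.cpow_add _ _ hv', Complex.cpow_one]
  push_cast
  field_simp
  ring

theorem norm_mellinKernel (hB : 0 < B) (hv : 0 < v) :
    ‖mellinKernel B z v‖ = v ^ (z.re - 1) * (v + B)⁻¹ := by
  rw [mellinKernel, norm_div, Complex.norm_cpow_eq_rpow_re_of_pos hv, Complex.norm_real,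
    Real.norm_of_nonneg (add_pos hv hB).le, div_eq_mul_inv, Complex.sub_re, Complex.one_re]

theorem norm_mellinKernel_le (hB : 0 < B) (hv : 0 < v) :
    ‖mellinKernel B z v‖ ≤ v ^ (z.re - 1) * B⁻¹ := by
  rw [norm_mellinKernel hB hv]
  gcongr
  exact le_add_of_nonneg_left hv.le

theorem continuousOn_ofReal_cpow (w : ℂ) : ContinuousOn (fun v : ℝ ↦ (v : ℂ) ^ w) (Set.Ioi 0) :=
  ContinuousOn.cpow (by fun_prop) (by fun_prop) fun _ hv ↦ .inl hv

theorem continuousOn_mellinKernel (hB : 0 < B) : ContinuousOn (mellinKernel B z) (Set.Ioi 0) :=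
  (continuousOn_ofReal_cpow _).div (by fun_prop) fun v (hv : 0 < v) ↦
    Complex.ofReal_ne_zero.2 (add_pos hv hB).ne'

theorem integrableOn_Ioc_rpow_sub_one {σ : ℝ} (hσ : 0 < σ) (V : ℝ) :
    IntegrableOn (fun v : ℝ ↦ v ^ (σ - 1)) (Set.Ioc 0 V) :=
  (intervalIntegral.intervalIntegrable_rpow' (by linarith)).1

theorem integral_Ioc_rpow_sub_one {σ : ℝ} (hσ : 0 < σ) (hV : 0 ≤ V) :
    ∫ v in Set.Ioc 0 V, v ^ (σ - 1) = V ^ σ / σ := by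
  rw [← intervalIntegral.integral_of_le hV, integral_rpow (.inl (by linarith)), sub_add_cancel,
    Real.zero_rpow hσ.ne', sub_zero]

theorem integrableOn_mellinKernel_Ioc (hB : 0 < B) (hz : 0 < z.re) (V : ℝ) :
    IntegrableOn (mellinKernel B z) (Set.Ioc 0 V) := by
  refine Integrable.mono' ((integrableOn_Ioc_rpow_sub_one hz V).mul_const B⁻¹)
    (((continuousOn_mellinKernel hB).mono Set.Ioc_subset_Ioi_self).aestronglyMeasurable
      measurableSet_Ioc) ?_
  filter_upwards [ae_restrict_mem measurableSet_Ioc] with v hv using norm_mellinKernel_le hB hv.1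

theorem integrableOn_mellinKernel_Ioi (hV : 0 < V) (hB : 0 < B) (hz : z.re < 1) :
    IntegrableOn (mellinKernel B z) (Set.Ioi V) := by
  refine Integrable.mono' (integrableOn_Ioi_rpow_of_lt (a := z.re - 2) (by linarith) hV)
    (((continuousOn_mellinKernel hB).mono (Set.Ioi_subset_Ioi hV.le)).aestronglyMeasurable
      measurableSet_Ioi) ?_
  filter_upwards [ae_restrict_mem measurableSet_Ioi] with v (hv : V < v)
  have hv0 : 0 < v := hV.trans hv
  calc ‖mellinKernel B z v‖ = v ^ (z.re - 1) * (v + B)⁻¹ := norm_mellinKernel hB hv0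
    _ ≤ v ^ (z.re - 1) * v⁻¹ := by gcongr; exact le_add_of_nonneg_right hB.le
    _ = v ^ (z.re - 2) := by
      rw [← Real.rpow_neg_one, ← Real.rpow_add hv0]
      ring_nf

theorem norm_truncatedMellin_le (hV : 0 ≤ V) (hB : 0 < B) (hz : 0 < z.re) :
    ‖truncatedMellin V B z‖ ≤ V ^ z.re / z.re * B⁻¹ := by
  rw [← integral_Ioc_rpow_sub_one hz hV, ← integral_mul_const]
  refine norm_integral_le_of_norm_le ((integrableOn_Ioc_rpow_sub_one hz V).mul_const B⁻¹) ?_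
  filter_upwards [ae_restrict_mem measurableSet_Ioc] with v hv using norm_mellinKernel_le hB hv.1

theorem norm_integral_Ioi_mellinKernel_le (hV : 0 < V) (hB : 0 < B) (hz : z.re < 0) :
    ‖∫ v in Set.Ioi V, mellinKernel B z v‖ ≤ V ^ z.re / (-z.re) * B⁻¹ := by
  have hint : IntegrableOn (fun v : ℝ ↦ v ^ (z.re - 1)) (Set.Ioi V) :=
    integrableOn_Ioi_rpow_of_lt (by linarith) hV
  have hval : ∫ v in Set.Ioi V, v ^ (z.re - 1) = V ^ z.re / (-z.re) := by
    rw [integral_Ioi_rpow_of_lt (by linarith) hV, sub_add_cancel, div_neg, neg_div]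
  rw [← hval, ← integral_mul_const]
  refine norm_integral_le_of_norm_le (hint.mul_const B⁻¹) ?_
  filter_upwards [ae_restrict_mem measurableSet_Ioi] with v hv
    using norm_mellinKernel_le hB (hV.trans hv)

theorem truncatedMellin_eq_mellin_indicator (V B : ℝ) :
    truncatedMellin V B =
      mellin ((Set.Ioc 0 V).indicator fun v : ℝ ↦ (((v + B : ℝ) : ℂ))⁻¹) := by
  funext z
  have hind : ∀ v : ℝ, (v : ℂ) ^ (z - 1) • (Set.Ioc 0 V).indicator (fun v ↦ ((v + B : ℝ) : ℂ)⁻¹) v =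
      (Set.Ioc 0 V).indicator (mellinKernel B z) v := fun v ↦ by
    by_cases hv : v ∈ Set.Ioc 0 V <;> simp [hv, mellinKernel, div_eq_mul_inv]
  simp only [truncatedMellin, mellin, hind]
  rw [setIntegral_indicator measurableSet_Ioc, Set.inter_eq_right.2 Set.Ioc_subset_Ioi_self]

theorem differentiableAt_truncatedMellin (V : ℝ) (hB : 0 < B) (hz : 0 < z.re) :
    DifferentiableAt ℂ (truncatedMellin V B) z := by
  have hint : IntegrableOn (fun v : ℝ ↦ ((v + B : ℝ) : ℂ)⁻¹) (Set.Ioc 0 V) :=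
    (integrableOn_mellinKernel_Ioc (z := 1) hB (by simp) V).congr_fun
      (fun v _ ↦ by simp [mellinKernel]) measurableSet_Ioc
  rw [truncatedMellin_eq_mellin_indicator]
  refine mellin_differentiableAt_of_isBigO_rpow (a := z.re + 1) (b := 0)
    ((integrable_indicator_iff measurableSet_Ioc).2 hint).integrableOn.locallyIntegrableOn
    ?_ (by linarith) ?_ hz
  · have hzero : (Set.Ioc 0 V).indicator (fun v : ℝ ↦ ((v + B : ℝ) : ℂ)⁻¹) =ᶠ[atTop] 0 := by
      filter_upwards [eventually_gt_atTop V] with v hv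
      exact Set.indicator_of_notMem (fun h ↦ h.2.not_gt hv) _
    exact hzero.trans_isBigO (Asymptotics.isBigO_zero _ _)
  · refine Asymptotics.IsBigO.of_bound B⁻¹ ?_
    filter_upwards [self_mem_nhdsWithin] with v (hv : 0 < v)
    refine (norm_indicator_le_norm_self _ _).trans ?_
    rw [norm_inv, Complex.norm_real, Real.norm_of_nonneg (add_pos hv hB).le, neg_zero,
      Real.rpow_zero, norm_one, mul_one]
    gcongr
    exact le_add_of_nonneg_left hv.le

theorem truncatedMellin_recurrence (hV : 0 ≤ V) (hB : 0 < B) (hz : 0 < z.re) :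
    truncatedMellin V B z = (B : ℂ)⁻¹ * ((V : ℂ) ^ z / z - truncatedMellin V B (z + 1)) := by
  have hz0 : z ≠ 0 := fun h ↦ by simp [h] at hz
  have hpow : ∫ v in Set.Ioc 0 V, (v : ℂ) ^ (z - 1) = (V : ℂ) ^ z / z := by
    rw [← intervalIntegral.integral_of_le hV, integral_cpow (.inl (by simpa using hz)),
      sub_add_cancel, Complex.ofReal_zero, Complex.zero_cpow hz0, sub_zero]
  have hint : IntegrableOn (fun v : ℝ ↦ (v : ℂ) ^ (z - 1)) (Set.Ioc 0 V) :=
    (intervalIntegral.intervalIntegrable_cpow' (by simpa using hz)).1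
  rw [truncatedMellin, truncatedMellin, ← hpow, ← integral_sub hint
    (integrableOn_mellinKernel_Ioc hB (by simp; linarith) V), ← integral_const_mul]
  exact setIntegral_congr_fun measurableSet_Ioc fun v hv ↦ mellinKernel_recurrence hB hv.1

theorem image_div_add_Ioi (hB : 0 < B) : (fun v ↦ v / (v + B)) '' Set.Ioi 0 = Set.Ioo 0 1 := by
  ext x
  constructor
  · rintro ⟨v, hv : 0 < v, rfl⟩
    exact ⟨by positivity, (div_lt_one (by positivity)).2 (by linarith)⟩
  · rintro ⟨hx0, hx1⟩
    have hx : 0 < 1 - x := sub_pos.2 hx1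
    refine ⟨B * x / (1 - x), div_pos (mul_pos hB hx0) hx, ?_⟩
    field_simp
    ring

theorem beta_integrand_comp_div_add (hB : 0 < B) (hv : 0 < v) :
    (B / (v + B) ^ 2) • (((v / (v + B) : ℝ) : ℂ) ^ (z - 1) *
        (1 - ((v / (v + B) : ℝ) : ℂ)) ^ (1 - z - 1)) =
      (B : ℂ) ^ (1 - z) * mellinKernel B z v := by
  have hu : 0 < v + B := add_pos hv hB
  have hu' : ((v + B : ℝ) : ℂ) ≠ 0 := Complex.ofReal_ne_zero.2 hu.ne'
  have hB' : (B : ℂ) ≠ 0 := Complex.ofReal_ne_zero.2 hB.ne'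
  have hdiv : ∀ x : ℝ, 0 ≤ x → ∀ w : ℂ,
      ((x / (v + B) : ℝ) : ℂ) ^ w = (x : ℂ) ^ w / ((v + B : ℝ) : ℂ) ^ w := fun x hx w ↦ by
    rw [eq_div_iff fun h ↦ hu' ((Complex.cpow_eq_zero_iff _ _).1 h).1,
      ← Complex.mul_cpow_ofReal_nonneg (by positivity) hu.le, ← Complex.ofReal_mul,
      div_mul_cancel₀ _ hu.ne']
  have hone_sub : 1 - ((v / (v + B) : ℝ) : ℂ) = ((B / (v + B) : ℝ) : ℂ) := by
    rw [← Complex.ofReal_one, ← Complex.ofReal_sub, one_sub_div hu.ne', add_sub_cancel_left]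
  have hB_pow : (B : ℂ) ^ (1 - z) = (B : ℂ) ^ (1 - z - 1) * B := by
    rw [Complex.cpow_sub (1 - z) 1 hB', Complex.cpow_one, div_mul_cancel₀ _ hB']
  have hu_pow : ((v + B : ℝ) : ℂ) ^ (z - 1) * ((v + B : ℝ) : ℂ) ^ (1 - z - 1) =
      ((v + B : ℝ) : ℂ)⁻¹ := by
    rw [← Complex.cpow_add _ _ hu', ← Complex.cpow_neg_one]
    ring_nf
  rw [hone_sub, hdiv v hv.le, hdiv B hB.le, Complex.real_smul, Complex.ofReal_div,
    Complex.ofReal_pow, div_mul_div_comm, hu_pow, hB_pow, mellinKernel]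
  field_simp

theorem integral_Ioi_zero_mellinKernel (hB : 0 < B) (hz0 : 0 < z.re) (hz1 : z.re < 1) :
    ∫ v in Set.Ioi 0, mellinKernel B z v =
      Real.pi / Complex.sin (Real.pi * z) * (B : ℂ) ^ (z - 1) := by
  have hbeta : Complex.betaIntegral z (1 - z) = Real.pi / Complex.sin (Real.pi * z) := by
    have h := Complex.Gamma_mul_Gamma_eq_betaIntegral hz0 (t := 1 - z) (by simpa using hz1)
    rw [add_sub_cancel, Complex.Gamma_one, one_mul, Complex.Gamma_mul_Gamma_one_sub] at h
    exact h.symm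
  have hderiv : ∀ v ∈ Set.Ioi (0 : ℝ),
      HasDerivWithinAt (fun v ↦ v / (v + B)) (B / (v + B) ^ 2) (Set.Ioi 0) v := fun v hv ↦ by
    have h := (hasDerivAt_id v).div ((hasDerivAt_id v).add_const B) (add_pos hv hB).ne'
    simpa using! h.hasDerivWithinAt
  have hmono : MonotoneOn (fun v ↦ v / (v + B)) (Set.Ioi 0) := fun u hu v hv huv ↦ by
    rw [div_le_div_iff₀ (add_pos hu hB) (add_pos hv hB)]
    nlinarith
  have hsubst := integral_image_eq_integral_deriv_smul_of_monotoneOn measurableSet_Ioi hderiv hmono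
    fun x : ℝ ↦ (x : ℂ) ^ (z - 1) * (1 - (x : ℂ)) ^ (1 - z - 1)
  rw [image_div_add_Ioi hB, ← integral_Ioc_eq_integral_Ioo,
    ← intervalIntegral.integral_of_le zero_le_one, ← Complex.betaIntegral, hbeta,
    setIntegral_congr_fun measurableSet_Ioi fun v hv ↦ beta_integrand_comp_div_add hB hv,
    integral_const_mul] at hsubst
  have hB' : (B : ℂ) ≠ 0 := Complex.ofReal_ne_zero.2 hB.ne'
  rw [hsubst, mul_right_comm, ← Complex.cpow_add _ _ hB', sub_add_sub_cancel', sub_self,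
    Complex.cpow_zero, one_mul]

theorem integral_Ioi_mellinKernel (hV : 0 < V) (hB : 0 < B) (hz0 : -1 < z.re) (hz1 : z.re < 0) :
    ∫ v in Set.Ioi V, mellinKernel B z v =
      Real.pi / Complex.sin (Real.pi * z) * (B : ℂ) ^ (z - 1) -
        (B : ℂ)⁻¹ * ((V : ℂ) ^ z / z - truncatedMellin V B (z + 1)) := by
  have hre : 0 < (z + 1).re ∧ (z + 1).re < 1 := by
    rw [Complex.add_re, Complex.one_re]
    exact ⟨by linarith, by linarith⟩
  have hint := integrableOn_mellinKernel_Ioi (z := z + 1) hV hB hre.2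
  have hpow : ∫ v in Set.Ioi V, (v : ℂ) ^ (z - 1) = -(V : ℂ) ^ z / z := by
    rw [integral_Ioi_cpow_of_lt (by simp; linarith) hV, sub_add_cancel]
  have hsplit : truncatedMellin V B (z + 1) + ∫ v in Set.Ioi V, mellinKernel B (z + 1) v =
      -(Real.pi / Complex.sin (Real.pi * z) * (B : ℂ) ^ z) := by
    rw [truncatedMellin, ← setIntegral_union (Set.Ioc_disjoint_Ioi le_rfl) measurableSet_Ioi
      (integrableOn_mellinKernel_Ioc hB hre.1 V) hint, Set.Ioc_union_Ioi_eq_Ioi hV.le,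
      integral_Ioi_zero_mellinKernel hB hre.1 hre.2, add_sub_cancel_right, mul_add, mul_one,
      Complex.sin_add_pi, div_neg, neg_mul]
  have hrec : ∫ v in Set.Ioi V, mellinKernel B z v =
      (B : ℂ)⁻¹ * (-(V : ℂ) ^ z / z - ∫ v in Set.Ioi V, mellinKernel B (z + 1) v) := by
    rw [← hpow, ← integral_sub (integrableOn_Ioi_cpow_of_lt (by simp; linarith) hV) hint,
      ← integral_const_mul]
    exact setIntegral_congr_fun measurableSet_Ioi fun v hv ↦
      mellinKernel_recurrence hB (hV.trans hv)
  rw [hrec, eq_sub_of_add_eq' hsplit, Complex.cpow_sub _ _ (Complex.ofReal_ne_zero.2 hB.ne'),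
    Complex.cpow_one]
  ring

end Mellin

/-- The analytic continuation of `z ↦ sin (π z) * truncatedMellin V B z` to the half-plane
`-J < re z`, obtained by applying `truncatedMellin_recurrence` `J` times. The quotient
`sin (π z) / (z + j)` is written as a `dslope`, which is entire. -/
noncomputable def sinMulTruncatedMellin (V B : ℝ) (J : ℕ) (z : ℂ) : ℂ :=
  ∑ j ∈ Finset.range J, (-1) ^ j * dslope (fun z ↦ Complex.sin (Real.pi * z)) (-j) z *
      ((V : ℂ) ^ (z + j) * ((B : ℂ) ^ (j + 1))⁻¹) +
    (-1) ^ J * Complex.sin (Real.pi * z) * ((B : ℂ) ^ J)⁻¹ * truncatedMellin V B (z + J)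

section SinMulTruncatedMellin

variable {V B : ℝ} {z : ℂ}

theorem dslope_sin_pi_mul_neg_natCast (j : ℕ) (hz : z + j ≠ 0) :
    dslope (fun z ↦ Complex.sin (Real.pi * z)) (-j) z = Complex.sin (Real.pi * z) / (z + j) := by
  have hsin : Complex.sin (Real.pi * (-j : ℂ)) = 0 := by
    rw [mul_neg, Complex.sin_neg, mul_comm, Complex.sin_nat_mul_pi, neg_zero]
  rw [dslope_of_ne _ fun h ↦ hz (by rw [h, neg_add_cancel]), slope_def_field, hsin, sub_zero,
    sub_neg_eq_add]

theorem differentiable_dslope_sin_pi_mul (c : ℂ) :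
    Differentiable ℂ (dslope (fun z ↦ Complex.sin (Real.pi * z)) c) :=
  differentiableOn_univ.1 <| (Complex.differentiableOn_dslope univ_mem).2 <| by fun_prop

theorem sinMulTruncatedMellin_zero (V B : ℝ) (z : ℂ) :
    sinMulTruncatedMellin V B 0 z = Complex.sin (Real.pi * z) * truncatedMellin V B z := by
  simp [sinMulTruncatedMellin]

theorem sinMulTruncatedMellin_succ (hV : 0 ≤ V) (hB : 0 < B) {J : ℕ} (hz : -(J : ℝ) < z.re) :
    sinMulTruncatedMellin V B (J + 1) z = sinMulTruncatedMellin V B J z := by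
  have hre : 0 < (z + J).re := by simp; linarith
  have hne : z + J ≠ 0 := fun h ↦ by simp [h] at hre
  have hB' : (B : ℂ) ≠ 0 := Complex.ofReal_ne_zero.2 hB.ne'
  rw [sinMulTruncatedMellin, sinMulTruncatedMellin, Finset.sum_range_succ, add_assoc,
    truncatedMellin_recurrence hV hB hre, dslope_sin_pi_mul_neg_natCast J hne]
  congr 1
  push_cast
  rw [← add_assoc z]
  field_simp
  ring

theorem sinMulTruncatedMellin_eq_one (hV : 0 ≤ V) (hB : 0 < B) {J : ℕ} (hJ : 1 ≤ J)
    (hz : -1 < z.re) : sinMulTruncatedMellin V B J z = sinMulTruncatedMellin V B 1 z := by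
  induction J, hJ using Nat.le_induction with
  | base => rfl
  | succ J hJ ih =>
    have hJ' : (1 : ℝ) ≤ J := by exact_mod_cast hJ
    rw [sinMulTruncatedMellin_succ hV hB (by linarith), ih]

theorem sin_mul_integral_Ioi_mellinKernel (hV : 0 < V) (hB : 0 < B) (hz0 : -1 < z.re)
    (hz1 : z.re < 0) :
    Complex.sin (Real.pi * z) * ∫ v in Set.Ioi V, mellinKernel B z v =
      Real.pi * (B : ℂ) ^ (z - 1) - sinMulTruncatedMellin V B 1 z := by
  have hz : z ≠ 0 := fun h ↦ by simp [h] at hz1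
  have hsin : Complex.sin (Real.pi * z) ≠ 0 := fun h ↦ by
    obtain ⟨n, hn⟩ := Complex.sin_eq_zero_iff.1 h
    have hn' : z = n := mul_left_cancel₀ (Complex.ofReal_ne_zero.2 Real.pi_ne_zero)
      (hn.trans (mul_comm _ _))
    rw [hn', Complex.intCast_re] at hz0 hz1
    norm_cast at hz0 hz1
    omega
  have hslope : dslope (fun z ↦ Complex.sin (Real.pi * z)) (-(0 : ℕ)) z =
      Complex.sin (Real.pi * z) / z := by
    rw [dslope_sin_pi_mul_neg_natCast 0 (by simpa using hz), Nat.cast_zero, add_zero]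
  rw [integral_Ioi_mellinKernel hV hB hz0 hz1, sinMulTruncatedMellin, Finset.sum_range_one, hslope]
  simp only [pow_zero, one_mul, Nat.cast_zero, add_zero, zero_add, pow_one, Nat.cast_one]
  field_simp
  ring

end SinMulTruncatedMellin

/-! ### The sequences attached to the cone -/

/-- The value of `v = k² ω² u² - 1/4` at the lower limit `u = k ^ (δ - 1) / ω` of the integral
defining `coneE0`, with `k` shifted by one. -/
noncomputable def coneCutoff (δ : ℝ) (k : ℕ) : ℝ :=
  ((k : ℝ) + 1) ^ (2 * δ) - 1 / 4

/-- The number `B` for which `u² + sinh(η)⁻²` is proportional to `v + B` under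
`v = k² ω² u² - 1/4`, where `b = ω² sinh(η)⁻²` and `k` is shifted by one. -/
noncomputable def coneShift (b : ℝ) (k : ℕ) : ℝ :=
  b * ((k : ℝ) + 1) ^ 2 + 1 / 4

section ConeSequences

variable {δ b : ℝ}

theorem ofReal_mul_rpow_mul_cpow {c x : ℝ} (hc : 0 ≤ c) (hx : 0 ≤ x) (p : ℝ) (k : ℕ) (w : ℂ) :
    ((c * (((k : ℝ) + 1) ^ p * x) : ℝ) : ℂ) ^ w =
      (c : ℂ) ^ w * (((k : ℂ) + 1) ^ (p * w) * (x : ℂ) ^ w) := by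
  have hK : (0 : ℝ) ≤ (k : ℝ) + 1 := by positivity
  have hpow : ((((k : ℝ) + 1) ^ p : ℝ) : ℂ) ^ w = ((k : ℂ) + 1) ^ (p * w) := by
    rw [← Complex.ofReal_one, ← Complex.ofReal_natCast, ← Complex.ofReal_add,
      Complex.cpow_mul_ofReal_nonneg hK]
  rw [Complex.ofReal_mul, Complex.mul_cpow_ofReal_nonneg hc (by positivity), Complex.ofReal_mul,
    Complex.mul_cpow_ofReal_nonneg (by positivity) hx, hpow]

theorem coneCutoff_eq_mul (δ : ℝ) (k : ℕ) :
    coneCutoff δ k = 1 * (((k : ℝ) + 1) ^ (2 * δ) *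
      (1 + -1 / 4 * ((k : ℝ) + 1) ^ (-(2 * δ)))) := by
  rw [coneCutoff, Real.rpow_neg (by positivity)]
  field_simp
  ring

theorem coneShift_eq_mul (hb : 0 < b) (k : ℕ) :
    coneShift b k = b * (((k : ℝ) + 1) ^ (2 : ℝ) *
      (1 + (4 * b)⁻¹ * ((k : ℝ) + 1) ^ (-(2 : ℝ)))) := by
  rw [coneShift, Real.rpow_neg (by positivity), Real.rpow_two]
  field_simp

theorem three_quarters_le_coneCutoff (hδ : 0 ≤ δ) (k : ℕ) : 3 / 4 ≤ coneCutoff δ k := by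
  have hone : (1 : ℝ) ≤ ((k : ℝ) + 1) ^ (2 * δ) := Real.one_le_rpow (by simp) (by linarith)
  rw [coneCutoff]
  linarith

theorem coneCutoff_pos (hδ : 0 ≤ δ) (k : ℕ) : 0 < coneCutoff δ k :=
  lt_of_lt_of_le (by norm_num) (three_quarters_le_coneCutoff hδ k)

theorem coneCutoff_le (δ : ℝ) (k : ℕ) : coneCutoff δ k ≤ ((k : ℝ) + 1) ^ (2 * δ) :=
  sub_le_self _ (by norm_num)

theorem coneShift_pos (hb : 0 ≤ b) (k : ℕ) : 0 < coneShift b k := by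
  rw [coneShift]
  positivity

theorem inv_coneShift_le (hb : 0 < b) (k : ℕ) :
    (coneShift b k)⁻¹ ≤ b⁻¹ * ((k : ℝ) + 1) ^ (-2 : ℝ) := by
  rw [Real.rpow_neg (by positivity), Real.rpow_two, ← mul_inv]
  exact inv_anti₀ (by positivity) (le_add_of_nonneg_right (by norm_num))

theorem coneShift_cpow (hb : 0 < b) (k : ℕ) (w : ℂ) :
    (coneShift b k : ℂ) ^ w = (b : ℂ) ^ w * (((k : ℂ) + 1) ^ (2 * w) *
      ((1 + (4 * b)⁻¹ * ((k : ℝ) + 1) ^ (-(2 : ℝ)) : ℝ) : ℂ) ^ w) := by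
  rw [coneShift_eq_mul hb, ofReal_mul_rpow_mul_cpow hb.le (by positivity), Complex.ofReal_ofNat]

theorem coneCutoff_cpow (hδ : 0 ≤ δ) (k : ℕ) (w : ℂ) :
    (coneCutoff δ k : ℂ) ^ w = ((k : ℂ) + 1) ^ (2 * δ * w) *
      ((1 + -1 / 4 * ((k : ℝ) + 1) ^ (-(2 * δ)) : ℝ) : ℂ) ^ w := by
  rw [coneCutoff_eq_mul, ofReal_mul_rpow_mul_cpow zero_le_one
    (one_add_mul_pos (by norm_num) (natCast_add_one_rpow_mem_Icc k (by linarith))).le]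
  simp

theorem coneCutoff_cpow_mul_inv_coneShift_pow (hδ : 0 ≤ δ) (hb : 0 < b) (j k : ℕ) (s : ℂ) :
    (coneCutoff δ k : ℂ) ^ (1 - s + j) * ((coneShift b k : ℂ) ^ (j + 1))⁻¹ =
      ((b : ℂ) ^ (j + 1))⁻¹ * (((k : ℂ) + 1) ^
          (-((2 * δ : ℝ) * s + (2 * (1 - δ) * (j + 1) : ℝ) : ℂ)) *
        (((1 + -1 / 4 * ((k : ℝ) + 1) ^ (-(2 * δ)) : ℝ) : ℂ) ^ (1 - s + j) *
          ((1 + (4 * b)⁻¹ * ((k : ℝ) + 1) ^ (-(2 : ℝ)) : ℝ) : ℂ) ^ (-(j + 1) : ℂ))) := by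
  have hinv : ∀ x : ℂ, (x ^ (j + 1))⁻¹ = x ^ (-(j + 1) : ℂ) := fun x ↦ by
    rw [Complex.cpow_neg, ← Nat.cast_add_one, Complex.cpow_natCast]
  have hexp : (-((2 * δ : ℝ) * s + (2 * (1 - δ) * (j + 1) : ℝ) : ℂ)) =
      2 * δ * (1 - s + j) + 2 * -(j + 1) := by
    push_cast
    ring
  rw [hinv, hinv, coneShift_cpow hb, coneCutoff_cpow hδ, hexp,
    Complex.cpow_add _ _ (Nat.cast_add_one_ne_zero k)]
  ring

theorem sumsMeromorphically_coneCutoff_cpow_mul (hδ : 0 < δ) (hb : 0 < b) (j : ℕ) :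
    SumsMeromorphically
      (fun k s ↦ (coneCutoff δ k : ℂ) ^ (1 - s + j) * ((coneShift b k : ℂ) ^ (j + 1))⁻¹)
      {s | 1 < 2 * δ * s.re + 2 * (1 - δ) * (j + 1)} Set.univ := by
  have hcut := (hasPowerExpansion_one_add_cpow_sub_one (θ := 2 * δ) (ε := -1 / 4) (by positivity)
    (by norm_num) (w := fun s ↦ 1 - s + j) (by fun_prop)).one_add (by positivity)
  have hshift := (hasPowerExpansion_one_add_cpow_sub_one (θ := 2) (ε := (4 * b)⁻¹) two_pos
    (neg_one_lt_zero.trans (by positivity)) (w := fun _ ↦ (-(j + 1) : ℂ))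
    (differentiable_const _)).one_add zero_le_two
  have hsum := ((hcut.mul hshift).sumsMeromorphically (2 * δ) (2 * (1 - δ) * (j + 1))).mul_left
    (differentiable_const ((b : ℂ) ^ (j + 1))⁻¹)
  simp only [add_sub_cancel, add_zero] at hsum
  exact hsum.congr fun s _ k ↦ coneCutoff_cpow_mul_inv_coneShift_pow hδ.le hb j k s

end ConeSequences

section ConeTransform

variable {δ b : ℝ}

theorem norm_inv_coneShift_pow_mul_truncatedMellin_le (hδ : 0 ≤ δ) (hb : 0 < b) (k : ℕ) {J : ℕ}
    {s : ℂ} (hs : s.re < J + 1) :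
    ‖((coneShift b k : ℂ) ^ J)⁻¹ *
        truncatedMellin (coneCutoff δ k) (coneShift b k) (1 - s + J)‖ ≤
      (1 - s.re + J)⁻¹ * b⁻¹ ^ (J + 1) *
        ((k : ℝ) + 1) ^ (2 * δ * (1 - s.re + J) - 2 * (J + 1)) := by
  have hre : (1 - s + J : ℂ).re = 1 - s.re + J := by simp
  have hσ : 0 < 1 - s.re + J := by linarith
  have hV := coneCutoff_pos hδ k
  have hB := coneShift_pos hb.le k
  have hmellin := norm_truncatedMellin_le hV.le hB (hre.symm ▸ hσ)
  rw [hre] at hmellin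
  rw [norm_mul, norm_inv, norm_pow, Complex.norm_real, Real.norm_of_nonneg hB.le]
  calc (coneShift b k ^ J)⁻¹ * ‖truncatedMellin (coneCutoff δ k) (coneShift b k) (1 - s + J)‖
      ≤ (coneShift b k ^ J)⁻¹ *
          (coneCutoff δ k ^ (1 - s.re + J) / (1 - s.re + J) * (coneShift b k)⁻¹) := by gcongr
    _ = (1 - s.re + J)⁻¹ * ((coneShift b k)⁻¹ ^ (J + 1) * coneCutoff δ k ^ (1 - s.re + J)) := by
      rw [pow_succ, inv_pow]
      ring
    _ ≤ (1 - s.re + J)⁻¹ * ((b⁻¹ * ((k : ℝ) + 1) ^ (-2 : ℝ)) ^ (J + 1) *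
          (((k : ℝ) + 1) ^ (2 * δ)) ^ (1 - s.re + J)) := by
      gcongr
      exacts [inv_coneShift_le hb k, coneCutoff_le δ k]
    _ = _ := by
      rw [mul_pow, natCast_add_one_rpow_neg_pow, ← Real.rpow_mul (by positivity),
        mul_assoc (b⁻¹ ^ _), ← Real.rpow_add (by positivity), ← mul_assoc,
        neg_add_eq_sub, Nat.cast_add_one]

theorem sumsMeromorphically_inv_coneShift_pow_mul_truncatedMellin (hδ0 : 0 ≤ δ) (hδ1 : δ < 1 / 2)
    (hb : 0 < b) (J : ℕ) :
    SumsMeromorphically (fun k s ↦ ((coneShift b k : ℂ) ^ J)⁻¹ *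
        truncatedMellin (coneCutoff δ k) (coneShift b k) (1 - s + J))
      Set.univ (Metric.ball 0 J) := by
  have hre : ∀ s ∈ Metric.ball (0 : ℂ) J, -(J : ℝ) < s.re ∧ s.re < J := fun s hs ↦
    abs_lt.1 ((Complex.abs_re_le_norm s).trans_lt (mem_ball_zero_iff.1 hs))
  refine .of_norm_le (u := fun k ↦ b⁻¹ ^ (J + 1) *
      ((k : ℝ) + 1) ^ (2 * δ * (1 + J + J) - 2 * (J + 1)))
    ((summable_natCast_add_one_rpow ?_).mul_left _) Metric.isOpen_ball (fun k s hs ↦ ?_)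
    fun k s hs ↦ ?_
  · have hδJ : 2 * δ * (1 + J + J) < 1 + J + J :=
      mul_lt_of_lt_one_left (by positivity) (by linarith)
    linarith
  · have hpos : 0 < (1 - s + J : ℂ).re := by simp; linarith [(hre s hs).2]
    have hdiff := (differentiableAt_truncatedMellin (coneCutoff δ k) (coneShift_pos hb.le k)
      hpos).comp s (f := fun s : ℂ ↦ 1 - s + J) (by fun_prop)
    exact (hdiff.const_mul _).differentiableWithinAt
  · have hs' := hre s hs
    have hinv : (1 - s.re + J)⁻¹ ≤ 1 := inv_le_one_of_one_le₀ (by linarith)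
    refine (norm_inv_coneShift_pow_mul_truncatedMellin_le hδ0 hb k (by linarith)).trans ?_
    rw [mul_assoc]
    refine (mul_le_of_le_one_left (by positivity) hinv).trans ?_
    gcongr
    · simp
    · linarith

theorem sumsMeromorphically_sinMulTruncatedMellin (hδ0 : 0 < δ) (hδ1 : δ < 1 / 2) (hb : 0 < b) :
    SumsMeromorphically
      (fun k s ↦ sinMulTruncatedMellin (coneCutoff δ k) (coneShift b k) 1 (1 - s))
      {s | 1 < 2 * δ * s.re + 2 * (1 - δ) ∧ s.re < 2} Set.univ := by
  refine .of_forall_ball ((isOpen_lt (by fun_prop) (by fun_prop)).and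
    (isOpen_lt (by fun_prop) (by fun_prop))) fun R ↦ ?_
  obtain ⟨J, hJ⟩ := exists_nat_ge (max R 1)
  have hpow := SumsMeromorphically.finset_sum (t := Finset.range J) fun j _ ↦
    ((sumsMeromorphically_coneCutoff_cpow_mul hδ0 hb j).mul_left
      (c := fun s ↦ (-1) ^ j * dslope (fun z ↦ Complex.sin (Real.pi * z)) (-j) (1 - s))
      (((differentiable_dslope_sin_pi_mul _).comp (by fun_prop)).const_mul _)).mono
      (D' := {s | 1 < 2 * δ * s.re + 2 * (1 - δ) ∧ s.re < 2}) (U' := Metric.ball 0 R)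
      (fun s hs ↦ ?_) (Set.subset_univ _)
  · have hrem := (sumsMeromorphically_inv_coneShift_pow_mul_truncatedMellin hδ0.le hδ1 hb
      J).mul_left
        (c := fun s ↦ (-1) ^ J * Complex.sin (Real.pi * (1 - s))) (by fun_prop)
    refine (hpow.add (hrem.mono (Set.subset_univ _)
      (Metric.ball_subset_ball ((le_max_left _ _).trans hJ)))).congr fun s hs k ↦ ?_
    rw [← sinMulTruncatedMellin_eq_one (coneCutoff_pos hδ0.le k).le (coneShift_pos hb.le k)
      (Nat.one_le_cast.1 ((le_max_right R 1).trans hJ)) (by simp; linarith [hs.2]),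
      sinMulTruncatedMellin, mul_assoc ((-1) ^ J * _)]
  · have hj : 0 ≤ (1 - δ) * j := mul_nonneg (by linarith) (Nat.cast_nonneg j)
    have hs1 := hs.1
    rw [Set.mem_ofPred_eq]
    linarith

end ConeTransform

theorem eq_zero_and_norm_deriv_zero_le_tsum {a : ℕ → ℂ → ℂ} {M : ℂ → ℂ} {u : ℕ → ℝ}
    (hM : ∀ᶠ s in 𝓝 0, HasSum (a · s) (M s)) (hu : Summable u)
    (ha : ∀ᶠ s in 𝓝 0, ∀ k, ‖a k s‖ ≤ u k * ‖s‖) : M 0 = 0 ∧ ‖deriv M 0‖ ≤ ∑' k, u k := by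
  have hle : ∀ᶠ s in 𝓝 0, ‖M s‖ ≤ (∑' k, u k) * ‖s‖ := by
    filter_upwards [hM, ha] with s hMs has
    exact hMs.norm_le_of_bounded (hu.hasSum.mul_right ‖s‖) has
  have hu0 : 0 ≤ ∑' k, u k := by
    obtain ⟨s, hs, hs0⟩ :=
      ((ha.filter_mono nhdsWithin_le_nhds).and (self_mem_nhdsWithin (s := {0}ᶜ))).exists
    exact tsum_nonneg fun k ↦ nonneg_of_mul_nonneg_left ((norm_nonneg _).trans (hs k))
      (norm_pos_iff.2 hs0)
  have hM0 : M 0 = 0 := by simpa using hle.self_of_nhds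
  exact ⟨hM0, norm_deriv_le_of_lip' hu0 (by simpa [hM0] using hle)⟩

section ConeTransformAtZero

variable {δ b : ℝ}

theorem exists_eventually_norm_sin_pi_mul_le :
    ∃ c : ℝ, ∀ᶠ s : ℂ in 𝓝 0, ‖Complex.sin (Real.pi * s)‖ ≤ c * ‖s‖ := by
  have hdiff : DifferentiableAt ℂ (fun s : ℂ ↦ Complex.sin (Real.pi * s)) 0 := by fun_prop
  simpa using hdiff.isBigO_sub.bound

theorem norm_truncatedMellin_cone_le (hδ : 0 ≤ δ) (hb : 0 < b) (k : ℕ) {s : ℂ}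
    (hs : s.re ≤ 1 / 2) (hδs : 2 * δ * (1 - s.re) ≤ δ + 1 / 2) :
    ‖truncatedMellin (coneCutoff δ k) (coneShift b k) (1 - s)‖ ≤
      2 * ((k : ℝ) + 1) ^ (δ - 3 / 2) * b⁻¹ := by
  have hJ := norm_inv_coneShift_pow_mul_truncatedMellin_le hδ hb k (J := 0) (s := s)
    (by simp; linarith)
  simp only [pow_zero, inv_one, one_mul, Nat.cast_zero, add_zero, zero_add, pow_one,
    mul_one] at hJ
  have hinv : (1 - s.re)⁻¹ ≤ 2 := inv_le_of_inv_le₀ two_pos (by linarith)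
  have hexp : 2 * δ * (1 - s.re) - 2 ≤ δ - 3 / 2 := by linarith
  calc _ ≤ (1 - s.re)⁻¹ * b⁻¹ * ((k : ℝ) + 1) ^ (2 * δ * (1 - s.re) - 2) := hJ
    _ ≤ 2 * b⁻¹ * ((k : ℝ) + 1) ^ (δ - 3 / 2) :=
      mul_le_mul (mul_le_mul_of_nonneg_right hinv (by positivity))
        (Real.rpow_le_rpow_of_exponent_le (by simp) hexp) (by positivity) (by positivity)
    _ = _ := by ring

theorem sinMulTruncatedMellin_one_one_sub (hδ : 0 ≤ δ) (hb : 0 < b) (k : ℕ) {s : ℂ}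
    (hs : s.re < 1) :
    sinMulTruncatedMellin (coneCutoff δ k) (coneShift b k) 1 (1 - s) =
      Complex.sin (Real.pi * s) * truncatedMellin (coneCutoff δ k) (coneShift b k) (1 - s) := by
  rw [sinMulTruncatedMellin_succ (coneCutoff_pos hδ k).le (coneShift_pos hb.le k)
    (by simp; linarith), sinMulTruncatedMellin_zero, mul_sub, mul_one, Complex.sin_pi_sub]

theorem exists_meromorphicOn_hasSum_sinMulTruncatedMellin (hδ0 : 0 < δ) (hδ1 : δ < 1 / 2) :
    ∃ C : ℝ, ∀ b > 0, ∃ M : ℂ → ℂ, MeromorphicOn M Set.univ ∧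
      (∀ s : ℂ, 0 ≤ s.re → s.re < 2 → HasSum
        (fun k ↦ sinMulTruncatedMellin (coneCutoff δ k) (coneShift b k) 1 (1 - s)) (M s)) ∧
      AnalyticAt ℂ M 0 ∧ ‖deriv M 0‖ ≤ C * b⁻¹ := by
  obtain ⟨c, hc⟩ := exists_eventually_norm_sin_pi_mul_le
  refine ⟨∑' k : ℕ, c * (2 * ((k : ℝ) + 1) ^ (δ - 3 / 2)), fun b hb ↦ ?_⟩
  obtain ⟨M, hM, hsum⟩ := sumsMeromorphically_sinMulTruncatedMellin hδ0 hδ1 hb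
  have hD : ∀ s : ℂ, 0 ≤ s.re → 1 < 2 * δ * s.re + 2 * (1 - δ) := fun s hs ↦ by
    linarith [mul_nonneg hδ0.le hs]
  have hnear : ∀ᶠ s : ℂ in 𝓝 0, 1 < 2 * δ * s.re + 2 * (1 - δ) ∧ s.re < 1 / 2 ∧
      2 * δ * (1 - s.re) < δ + 1 / 2 := by
    refine (ContinuousAt.eventually_lt (by fun_prop) (by fun_prop) (hD 0 le_rfl)).and
      ((ContinuousAt.eventually_lt (by fun_prop) (by fun_prop) (by simp)).and
      (ContinuousAt.eventually_lt (by fun_prop) (by fun_prop) ?_))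
    rw [Complex.zero_re]
    linarith
  refine ⟨M, hM, fun s hs0 hs2 ↦ (hsum s ⟨⟨hD s hs0, hs2⟩, trivial⟩).2,
    (hsum 0 ⟨⟨hD 0 le_rfl, by simp⟩, trivial⟩).1, ?_⟩
  rw [← tsum_mul_right]
  refine (eq_zero_and_norm_deriv_zero_le_tsum
    (a := fun k s ↦ sinMulTruncatedMellin (coneCutoff δ k) (coneShift b k) 1 (1 - s)) ?_
    ((((summable_natCast_add_one_rpow (by linarith)).mul_left _).mul_left _).mul_right _) ?_).2
  · filter_upwards [hnear] with s hs using (hsum s ⟨⟨hs.1, by linarith [hs.2.1]⟩, trivial⟩).2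
  · filter_upwards [hnear, hc] with s ⟨_, hs, hδs⟩ hsin k
    rw [sinMulTruncatedMellin_one_one_sub hδ0.le hb k (by linarith), norm_mul]
    exact (mul_le_mul hsin (norm_truncatedMellin_cone_le hδ0.le hb k hs.le hδs.le) (norm_nonneg _)
      ((norm_nonneg _).trans hsin)).trans_eq (by ring)

end ConeTransformAtZero

/-- The difference between `(coneShift b k) ^ (-s)` and its leading term `(b (k + 1)²) ^ (-s)`,
divided by `b ^ (-s)`. -/
noncomputable def coneShiftCorrection (b : ℝ) (k : ℕ) (s : ℂ) : ℂ :=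
  ((k : ℂ) + 1) ^ (-(2 * s)) *
    (((1 + (4 * b)⁻¹ * ((k : ℝ) + 1) ^ (-(2 : ℝ)) : ℝ) : ℂ) ^ (-s) - 1)

section ConeShiftZeta

variable {b : ℝ}

theorem coneShift_cpow_neg (hb : 0 < b) (k : ℕ) (s : ℂ) :
    (coneShift b k : ℂ) ^ (-s) =
      (b : ℂ) ^ (-s) * (((k : ℂ) + 1) ^ (-(2 * s)) + coneShiftCorrection b k s) := by
  rw [coneShift_cpow hb, mul_neg, coneShiftCorrection]
  ring

theorem sumsMeromorphically_coneShiftCorrection (hb : 0 < b) :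
    SumsMeromorphically (coneShiftCorrection b) {s | -(1 / 2) < s.re} Set.univ := by
  have h := (hasPowerExpansion_one_add_cpow_sub_one (θ := 2) (ε := (4 * b)⁻¹) two_pos
    (neg_one_lt_zero.trans (by positivity)) differentiable_neg).sumsMeromorphically 2 0
  simp only [Complex.ofReal_ofNat, Complex.ofReal_zero, add_zero] at h
  refine h.mono (fun s hs ↦ ?_) subset_rfl
  rw [Set.mem_ofPred_eq] at hs ⊢
  linarith

theorem norm_one_add_cpow_neg_sub_one_le {y : ℝ} (hy : 0 ≤ y) {s : ℂ} (hs : y * ‖s‖ ≤ 1) :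
    ‖((1 + y : ℝ) : ℂ) ^ (-s) - 1‖ ≤ 2 * (y * ‖s‖) := by
  have hpos : 0 < 1 + y := by linarith
  have hlog : ‖(Real.log (1 + y) : ℂ) * -s‖ ≤ y * ‖s‖ := by
    rw [norm_mul, norm_neg, Complex.norm_real,
      Real.norm_of_nonneg (Real.log_nonneg (le_add_of_nonneg_right hy))]
    gcongr
    linarith [Real.log_le_sub_one_of_pos hpos]
  rw [Complex.cpow_def_of_ne_zero (Complex.ofReal_ne_zero.2 hpos.ne'), ← Complex.ofReal_log hpos.le]
  exact (Complex.norm_exp_sub_one_le (hlog.trans hs)).trans (by gcongr)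

theorem norm_coneShiftCorrection_le (hb : 0 < b) (k : ℕ) {s : ℂ} (hre : -(1 / 4) ≤ s.re)
    (hs : ‖s‖ ≤ 4 * b) :
    ‖coneShiftCorrection b k s‖ ≤ ((k : ℝ) + 1) ^ (-(3 / 2) : ℝ) * b⁻¹ * ‖s‖ := by
  have hK := natCast_add_one_rpow_mem_Icc k (θ := 2) zero_le_two
  have hy : (4 * b)⁻¹ * ((k : ℝ) + 1) ^ (-(2 : ℝ)) * ‖s‖ ≤ 1 := calc
    _ ≤ (4 * b)⁻¹ * 1 * (4 * b) := by gcongr; exact hK.2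
    _ = 1 := by field_simp
  rw [coneShiftCorrection, norm_mul, norm_natCast_add_one_cpow]
  calc _ ≤ ((k : ℝ) + 1) ^ (1 / 2 : ℝ) *
        (2 * ((4 * b)⁻¹ * ((k : ℝ) + 1) ^ (-(2 : ℝ)) * ‖s‖)) := by
        gcongr
        · simp
        · simp; linarith
        · exact norm_one_add_cpow_neg_sub_one_le (by positivity) hy
    _ = 2⁻¹ * (((k : ℝ) + 1) ^ (-(3 / 2) : ℝ) * b⁻¹ * ‖s‖) := by
        rw [show (-(3 / 2) : ℝ) = 1 / 2 + -2 by norm_num, Real.rpow_add (by positivity)]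
        field_simp
        norm_num
    _ ≤ _ := mul_le_of_le_one_left (by positivity) (by norm_num)

theorem hasDerivAt_cpow_neg_mul_zeta_add (hb : 0 < b) {M : ℂ → ℂ} {M' : ℂ} (hM0 : M 0 = 0)
    (hM : HasDerivAt M M' 0) :
    HasDerivAt (fun s : ℂ ↦ (b : ℂ) ^ (-s) * (riemannZeta (2 * s) + M s))
      (2 * deriv riemannZeta 0 - Real.log b * riemannZeta 0 + M') 0 := by
  have hzeta : HasDerivAt (fun s : ℂ ↦ riemannZeta (2 * s)) (deriv riemannZeta 0 * 2) 0 := by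
    have h0 : HasDerivAt riemannZeta (deriv riemannZeta 0) (2 * 0) := by
      rw [mul_zero]
      exact (differentiableAt_riemannZeta zero_ne_one).hasDerivAt
    simpa using! h0.comp 0 ((hasDerivAt_id (0 : ℂ)).const_mul 2)
  have hpow := (hasDerivAt_neg (0 : ℂ)).const_cpow (c := (b : ℂ))
    (.inl (Complex.ofReal_ne_zero.2 hb.ne'))
  convert! hpow.mul (hzeta.add hM) using 1
  simp only [neg_zero, Complex.cpow_zero, Pi.add_apply, mul_zero, hM0, ← Complex.ofReal_log hb.le]
  ring

theorem exists_meromorphicOn_hasSum_coneShift_cpow_neg :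
    ∃ C : ℝ, ∀ b > 0, ∃ Z : ℂ → ℂ, MeromorphicOn Z Set.univ ∧
      (∀ s : ℂ, 1 / 2 < s.re → HasSum (fun k ↦ (coneShift b k : ℂ) ^ (-s)) (Z s)) ∧
      AnalyticAt ℂ Z 0 ∧
      ‖deriv Z 0 - (2 * deriv riemannZeta 0 - Real.log b * riemannZeta 0)‖ ≤ C * b⁻¹ := by
  refine ⟨∑' k : ℕ, ((k : ℝ) + 1) ^ (-(3 / 2) : ℝ), fun b hb ↦ ?_⟩
  obtain ⟨M, hM, hsum⟩ := sumsMeromorphically_coneShiftCorrection hb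
  replace hsum : ∀ s : ℂ, -(1 / 2) < s.re → AnalyticAt ℂ M s ∧ HasSum _ _ :=
    fun s hs ↦ hsum s ⟨hs, trivial⟩
  have hpow : ∀ s : ℂ, AnalyticAt ℂ (fun s ↦ (b : ℂ) ^ (-s)) s := fun s ↦
    (differentiable_neg.const_cpow (.inl (Complex.ofReal_ne_zero.2 hb.ne'))).analyticAt s
  have hlin : ∀ s : ℂ, AnalyticAt ℂ (fun s : ℂ ↦ 2 * s) s := fun s ↦ by fun_prop
  have hMan : AnalyticAt ℂ M 0 := (hsum 0 (by simp)).1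
  obtain ⟨hM0, hM'⟩ : M 0 = 0 ∧ ‖deriv M 0‖ ≤ ∑' k : ℕ, ((k : ℝ) + 1) ^ (-(3 / 2) : ℝ) * b⁻¹ := by
    have hre : ∀ᶠ s : ℂ in 𝓝 0, -(1 / 4) < s.re :=
      continuousAt_const.eventually_lt Complex.continuous_re.continuousAt (by simp)
    refine eq_zero_and_norm_deriv_zero_le_tsum (a := coneShiftCorrection b) ?_
      ((summable_natCast_add_one_rpow (by norm_num)).mul_right _) ?_
    · filter_upwards [hre] with s hs using (hsum s (by linarith)).2
    · filter_upwards [hre, Metric.closedBall_mem_nhds 0 (by positivity : 0 < 4 * b)] with s hs hsb k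
      exact norm_coneShiftCorrection_le hb k hs.le (mem_closedBall_zero_iff.1 hsb)
  refine ⟨fun s ↦ (b : ℂ) ^ (-s) * (riemannZeta (2 * s) + M s), fun s _ ↦
    (hpow s).meromorphicAt.mul
      (((meromorphicAt_riemannZeta _).comp_analyticAt (hlin s)).add (hM s trivial)),
    fun s hs ↦ ?_, (hpow 0).mul ((AnalyticAt.comp (g := riemannZeta)
      (analyticAt_riemannZeta (by simp)) (hlin 0)).add hMan), ?_⟩
  · simp only [coneShift_cpow_neg hb]
    exact ((hasSum_riemannZeta (by simp; linarith)).add (hsum s (by linarith)).2).mul_left _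
  · rw [(hasDerivAt_cpow_neg_mul_zeta_add hb hM0 hMan.differentiableAt.hasDerivAt).deriv,
      add_sub_cancel_left, ← tsum_mul_right]
    exact hM'

end ConeShiftZeta

/-! ### The integrals `E_{0,k}` -/

theorem integral_Ioi_comp_mul_sq_sub {E : Type*} [NormedAddCommGroup E] [NormedSpace ℝ E]
    {a c : ℝ} (ha : 0 ≤ a) (hc : 0 < c) (d : ℝ) (g : ℝ → E) :
    ∫ u in Set.Ioi a, (c * (2 * u)) • g (c * u ^ 2 - d) =
      ∫ v in Set.Ioi (c * a ^ 2 - d), g v := by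
  have himage : (fun u ↦ c * u ^ 2 - d) '' Set.Ioi a = Set.Ioi (c * a ^ 2 - d) := by
    ext v
    simp only [Set.mem_image, Set.mem_Ioi]
    constructor
    · rintro ⟨u, hu, rfl⟩
      have hsq : a ^ 2 < u ^ 2 := pow_lt_pow_left₀ hu ha two_ne_zero
      exact sub_lt_sub_right (mul_lt_mul_of_pos_left hsq hc) d
    · intro hv
      have hsq : a ^ 2 < (v + d) / c := (lt_div_iff₀' hc).2 (by linarith)
      refine ⟨√((v + d) / c), Real.lt_sqrt_of_sq_lt hsq, ?_⟩
      rw [Real.sq_sqrt ((sq_nonneg a).trans hsq.le)]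
      field_simp
      ring
  have hmono : MonotoneOn (fun u ↦ c * u ^ 2 - d) (Set.Ioi a) := fun u hu w _ huw ↦ by
    have hsq : u ^ 2 ≤ w ^ 2 := pow_le_pow_left₀ (ha.trans (le_of_lt hu)) huw 2
    exact sub_le_sub_right (mul_le_mul_of_nonneg_left hsq hc.le) d
  rw [← himage, integral_image_eq_integral_deriv_smul_of_monotoneOn measurableSet_Ioi (fun u _ ↦ ?_)
    hmono]
  simpa using! (((hasDerivAt_pow 2 u).const_mul c).sub_const d).hasDerivWithinAt

theorem tendstoLocallyUniformlyOn_tsum_nat_of_norm_le_mul {X E : Type*} [TopologicalSpace X]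
    [NormedAddCommGroup E] [CompleteSpace E] {f : ℕ → X → E} {S : Set X} {Φ : X → ℝ} {u : ℕ → ℝ}
    (hΦ : ContinuousOn Φ S) (hu : Summable u) (hu0 : ∀ n, 0 ≤ u n)
    (hf : ∀ n, ∀ x ∈ S, ‖f n x‖ ≤ Φ x * u n) :
    TendstoLocallyUniformlyOn (fun N x ↦ ∑ n ∈ Finset.range N, f n x) (fun x ↦ ∑' n, f n x)
      atTop S := by
  refine tendstoLocallyUniformlyOn_of_forall_exists_nhds fun x hx ↦
    ⟨{y ∈ S | Φ y < Φ x + 1}, inter_mem self_mem_nhdsWithin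
      ((hΦ x hx).eventually_lt_const (lt_add_one _)), ?_⟩
  exact tendstoUniformlyOn_tsum_nat (hu.mul_left (Φ x + 1)) fun n y hy ↦
    (hf n y hy.1).trans (mul_le_mul_of_nonneg_right hy.2.le (hu0 n))

/-- The parameter `b` of `coneShift` for the cone of angle `2π/ω` with boundary parameter `η`. -/
noncomputable def coneScale (ω : ℕ) (η : ℝ) : ℝ :=
  (ω : ℝ) ^ 2 * (Real.sinh η)⁻¹ ^ 2

section ConeIntegral

variable {ω : ℕ} {η δ : ℝ}

theorem coneScale_pos (hω : 1 ≤ ω) (hη : 0 < η) : 0 < coneScale ω η := by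
  have hsinh : 0 < Real.sinh η := Real.sinh_pos_iff.2 hη
  rw [coneScale]
  positivity

theorem mul_sq_sub_eq_coneCutoff (hω : 1 ≤ ω) (δ : ℝ) (k : ℕ) :
    ((k : ℝ) + 1) ^ 2 * (ω : ℝ) ^ 2 * (((k : ℝ) + 1) ^ (δ - 1) / ω) ^ 2 - 1 / 4 =
      coneCutoff δ k := by
  have hK : (0 : ℝ) < (k : ℝ) + 1 := by positivity
  rw [coneCutoff, div_pow, Real.rpow_sub_one hK.ne', two_mul, Real.rpow_add hK]
  field_simp

theorem coneE0_eq_integral_mellinKernel (hω : 1 ≤ ω) (η δ : ℝ) (k : ℕ) (s : ℂ) :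
    coneE0 ω η δ (k + 1) s = -(Complex.sin (Real.pi * s) / (2 * Real.pi)) *
      ∫ v in Set.Ioi (coneCutoff δ k), mellinKernel (coneShift (coneScale ω η) k) (1 - s) v := by
  have hcut : 0 < ((k : ℝ) + 1) ^ (δ - 1) / ω := by positivity
  rw [coneE0, Nat.cast_add_one, ← mul_sq_sub_eq_coneCutoff hω,
    ← integral_Ioi_comp_mul_sq_sub hcut.le (by positivity)]
  suffices h : ∀ u ∈ Set.Ioi (((k : ℝ) + 1) ^ (δ - 1) / ω),
      (((k : ℝ) + 1) ^ 2 * (ω : ℝ) ^ 2 * (2 * u)) •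
        mellinKernel (coneShift (coneScale ω η) k) (1 - s)
          (((k : ℝ) + 1) ^ 2 * (ω : ℝ) ^ 2 * u ^ 2 - 1 / 4) =
      2 * (((((k : ℝ) + 1) ^ 2 * (ω : ℝ) ^ 2 * u ^ 2 - 1 / 4 : ℝ) : ℂ) ^ (-s) *
        ((u / (u ^ 2 + (Real.sinh η)⁻¹ ^ 2) : ℝ) : ℂ)) by
    rw [setIntegral_congr_fun measurableSet_Ioi h, integral_const_mul]
    ring
  intro u _
  have hdenom : ((k : ℝ) + 1) ^ 2 * (ω : ℝ) ^ 2 * u ^ 2 - 1 / 4 + coneShift (coneScale ω η) k =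
      ((k : ℝ) + 1) ^ 2 * (ω : ℝ) ^ 2 * (u ^ 2 + (Real.sinh η)⁻¹ ^ 2) := by
    rw [coneShift, coneScale]
    ring
  have hratio : ((k : ℝ) + 1) ^ 2 * (ω : ℝ) ^ 2 * (2 * u) /
      (((k : ℝ) + 1) ^ 2 * (ω : ℝ) ^ 2 * (u ^ 2 + (Real.sinh η)⁻¹ ^ 2)) =
      2 * (u / (u ^ 2 + (Real.sinh η)⁻¹ ^ 2)) := by
    rw [mul_div_mul_left _ _ (by positivity), mul_div_assoc]
  rw [mellinKernel, hdenom, sub_sub_cancel_left, Complex.real_smul, mul_div_left_comm,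
    ← Complex.ofReal_div, hratio, Complex.ofReal_mul, Complex.ofReal_ofNat, mul_left_comm]

theorem coneE0_eq_of_re_mem_Ioo (hω : 1 ≤ ω) (hη : 0 < η) (hδ : 0 ≤ δ) (k : ℕ) {s : ℂ}
    (hs1 : 1 < s.re) (hs2 : s.re < 2) :
    coneE0 ω η δ (k + 1) s = -(1 / 2) * (coneShift (coneScale ω η) k : ℂ) ^ (-s) +
      1 / (2 * Real.pi) *
        sinMulTruncatedMellin (coneCutoff δ k) (coneShift (coneScale ω η) k) 1 (1 - s) := by
  have hpi : (Real.pi : ℂ) ≠ 0 := Complex.ofReal_ne_zero.2 Real.pi_ne_zero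
  have hsin : Complex.sin (Real.pi * (1 - s)) = Complex.sin (Real.pi * s) := by
    rw [mul_sub, mul_one, Complex.sin_pi_sub]
  have htail := sin_mul_integral_Ioi_mellinKernel (coneCutoff_pos hδ k)
    (coneShift_pos (coneScale_pos hω hη).le k) (z := 1 - s) (by simp; linarith) (by simp; linarith)
  rw [hsin, sub_sub_cancel_left] at htail
  rw [coneE0_eq_integral_mellinKernel hω, neg_mul, div_mul_eq_mul_div, htail]
  field_simp
  ring

theorem norm_coneE0_le (hω : 1 ≤ ω) (hη : 0 < η) (hδ : 0 ≤ δ) (k : ℕ) {s : ℂ} (hs : 1 < s.re) :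
    ‖coneE0 ω η δ (k + 1) s‖ ≤
      ‖Complex.sin (Real.pi * s) / (2 * Real.pi)‖ * ((3 / 4) ^ (1 - s.re) / (s.re - 1)) *
        (coneScale ω η)⁻¹ * ((k : ℝ) + 1) ^ (-2 : ℝ) := by
  have hb : 0 < coneScale ω η := coneScale_pos hω hη
  have htail := norm_integral_Ioi_mellinKernel_le (coneCutoff_pos hδ k) (coneShift_pos hb.le k)
    (z := 1 - s) (by simpa using hs)
  rw [Complex.sub_re, Complex.one_re, neg_sub] at htail
  have hcut : coneCutoff δ k ^ (1 - s.re) ≤ (3 / 4 : ℝ) ^ (1 - s.re) :=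
    Real.rpow_le_rpow_of_nonpos (by norm_num) (three_quarters_le_coneCutoff hδ k) (by linarith)
  rw [coneE0_eq_integral_mellinKernel hω, norm_mul, norm_neg, mul_assoc, mul_assoc]
  gcongr
  refine htail.trans ?_
  gcongr
  · exact (inv_pos.2 (coneShift_pos hb.le k)).le
  · exact inv_coneShift_le hb k

theorem summable_norm_coneE0 (hω : 1 ≤ ω) (hη : 0 < η) (hδ : 0 ≤ δ) {s : ℂ} (hs : 1 < s.re) :
    Summable fun k : ℕ ↦ ‖coneE0 ω η δ (k + 1) s‖ :=
  .of_nonneg_of_le (fun _ ↦ norm_nonneg _) (fun k ↦ norm_coneE0_le hω hη hδ k hs)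
    ((summable_natCast_add_one_rpow (by norm_num)).mul_left _)

theorem tendstoLocallyUniformlyOn_sum_coneE0 (hω : 1 ≤ ω) (hη : 0 < η) (hδ : 0 ≤ δ) :
    TendstoLocallyUniformlyOn (fun (n : ℕ) s ↦ ∑ k ∈ Finset.range n, coneE0 ω η δ (k + 1) s)
      (fun s ↦ ∑' k : ℕ, coneE0 ω η δ (k + 1) s) atTop {s | 1 < s.re} := by
  refine tendstoLocallyUniformlyOn_tsum_nat_of_norm_le_mul ?_
    (summable_natCast_add_one_rpow (by norm_num)) (fun k ↦ by positivity)
    fun k s hs ↦ norm_coneE0_le hω hη hδ k hs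
  refine ((Continuous.continuousOn (by fun_prop)).mul (.div ?_ (by fun_prop) ?_)).mul
    continuousOn_const
  · exact .rpow continuousOn_const (by fun_prop) fun _ _ ↦ .inl (by norm_num)
  · exact fun s hs ↦ sub_ne_zero.2 (ne_of_gt hs)

theorem exists_meromorphicOn_hasSum_coneE0 (hω : 1 ≤ ω) (hδ0 : 0 < δ) (hδ1 : δ < 1 / 2) :
    ∃ C : ℝ, ∀ η > 0, ∃ F : ℂ → ℂ, MeromorphicOn F Set.univ ∧
      (∀ s : ℂ, 1 < s.re → s.re < 2 → HasSum (fun k : ℕ ↦ coneE0 ω η δ (k + 1) s) (F s)) ∧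
      AnalyticAt ℂ F 0 ∧
      ‖deriv F 0 - (riemannZeta 0 * (1 / 2 * Real.log (coneScale ω η)) - deriv riemannZeta 0)‖ ≤
        C * (coneScale ω η)⁻¹ := by
  obtain ⟨C₁, hZ⟩ := exists_meromorphicOn_hasSum_coneShift_cpow_neg
  obtain ⟨C₂, hM⟩ := exists_meromorphicOn_hasSum_sinMulTruncatedMellin hδ0 hδ1
  refine ⟨‖(-(1 / 2) : ℂ)‖ * C₁ + ‖(1 / (2 * Real.pi) : ℂ)‖ * C₂, fun η hη ↦ ?_⟩
  obtain ⟨Z, hZmero, hZsum, hZan, hZderiv⟩ := hZ _ (coneScale_pos hω hη)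
  obtain ⟨M, hMmero, hMsum, hMan, hMderiv⟩ := hM _ (coneScale_pos hω hη)
  refine ⟨fun s ↦ -(1 / 2) * Z s + 1 / (2 * Real.pi) * M s, fun s hs ↦
    ((MeromorphicAt.const _ _).mul (hZmero s hs)).add ((MeromorphicAt.const _ _).mul (hMmero s hs)),
    fun s hs1 hs2 ↦ ?_, (analyticAt_const.mul hZan).add (analyticAt_const.mul hMan), ?_⟩
  · simp only [coneE0_eq_of_re_mem_Ioo hω hη hδ0.le _ hs1 hs2]
    exact ((hZsum s (by linarith)).mul_left _).add ((hMsum s (by linarith) hs2).mul_left _)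
  · rw [((hZan.differentiableAt.hasDerivAt.const_mul _).fun_add
      (hMan.differentiableAt.hasDerivAt.const_mul _)).deriv]
    calc _ = ‖-(1 / 2) * (deriv Z 0 - (2 * deriv riemannZeta 0 -
            Real.log (coneScale ω η) * riemannZeta 0)) + 1 / (2 * Real.pi) * deriv M 0‖ := by
          congr 1
          ring
      _ ≤ ‖(-(1 / 2) : ℂ)‖ * (C₁ * (coneScale ω η)⁻¹) +
            ‖(1 / (2 * Real.pi) : ℂ)‖ * (C₂ * (coneScale ω η)⁻¹) :=
          norm_add_le_of_le (norm_mul_le_of_le le_rfl hZderiv) (norm_mul_le_of_le le_rfl hMderiv)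
      _ = _ := by ring

end ConeIntegral

section SmallBoundaryParameter

variable {ω : ℕ}

theorem tendsto_log_div_sinh :
    Tendsto (fun η : ℝ ↦ Real.log (η / Real.sinh η)) (𝓝[>] 0) (𝓝 0) := by
  have hslope : Tendsto (fun η : ℝ ↦ Real.sinh η / η) (𝓝[>] 0) (𝓝 1) := by
    simpa [div_eq_inv_mul] using (Real.hasDerivAt_sinh 0).tendsto_slope_zero_right
  simpa using (hslope.inv₀ one_ne_zero).log (by norm_num)

theorem half_mul_log_coneScale (hω : 1 ≤ ω) {η : ℝ} (hη : 0 < η) :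
    1 / 2 * Real.log (coneScale ω η) =
      Real.log ω - Real.log η + Real.log (η / Real.sinh η) := by
  have hsinh : 0 < Real.sinh η := Real.sinh_pos_iff.2 hη
  rw [coneScale, Real.log_mul (by positivity) (by positivity), Real.log_pow, Real.log_pow,
    Real.log_inv, Real.log_div hη.ne' hsinh.ne']
  push_cast
  ring

theorem tendsto_inv_coneScale (ω : ℕ) :
    Tendsto (fun η ↦ (coneScale ω η)⁻¹) (𝓝 0) (𝓝 0) := by
  have hcont : Continuous fun η : ℝ ↦ ((ω : ℝ) ^ 2)⁻¹ * Real.sinh η ^ 2 := by fun_prop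
  simpa [coneScale, mul_comm] using! hcont.tendsto 0

theorem tendsto_deriv_zero_sub_of_norm_le (hω : 1 ≤ ω) {C : ℝ} {F : ℝ → ℂ → ℂ}
    (hF : ∀ η > 0, ‖deriv (F η) 0 - (riemannZeta 0 * (1 / 2 * Real.log (coneScale ω η)) -
      deriv riemannZeta 0)‖ ≤ C * (coneScale ω η)⁻¹) :
    Tendsto (fun η : ℝ ↦ deriv (F η) 0 - (riemannZeta 0 * (Real.log ω : ℂ) -
      deriv riemannZeta 0 - riemannZeta 0 * (Real.log η : ℂ))) (𝓝[>] 0) (𝓝 0) := by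
  have herror : Tendsto (fun η : ℝ ↦ deriv (F η) 0 - (riemannZeta 0 *
      (1 / 2 * Real.log (coneScale ω η)) - deriv riemannZeta 0)) (𝓝[>] 0) (𝓝 0) := by
    refine squeeze_zero_norm' (eventually_mem_of_tendsto_nhdsWithin tendsto_id |>.mono hF) ?_
    simpa using ((tendsto_inv_coneScale ω).mono_left nhdsWithin_le_nhds).const_mul C
  have hlog : Tendsto (fun η : ℝ ↦ riemannZeta 0 * (Real.log (η / Real.sinh η) : ℂ))
      (𝓝[>] 0) (𝓝 0) := by
    simpa using ((Complex.continuous_ofReal.tendsto 0).comp tendsto_log_div_sinh).const_mul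
      (riemannZeta 0)
  refine (add_zero (0 : ℂ) ▸ herror.add hlog).congr' ?_
  filter_upwards [self_mem_nhdsWithin] with η hη
  have hscale : (1 / 2 * Real.log (coneScale ω η) : ℂ) =
      Real.log ω - Real.log η + Real.log (η / Real.sinh η) := by
    simpa using! congrArg Complex.ofReal (half_mul_log_coneScale hω hη)
  rw [hscale]
  ring

end SmallBoundaryParameter

theorem statement6_general (ω : ℕ) (hω : 1 ≤ ω) (δ : ℝ) (hδ0 : 0 < δ) (hδ1 : δ < 1 / 2) :
    ∃ F : ℝ → ℂ → ℂ,
      (∀ η : ℝ, 0 < η →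
        (∀ s ∈ {s : ℂ | 1 < s.re ∧ s.re < 2},
          Summable (fun k : ℕ => ‖coneE0 ω η δ (k + 1) s‖)) ∧
        TendstoLocallyUniformlyOn
          (fun (n : ℕ) (s : ℂ) => ∑ k ∈ Finset.range n, coneE0 ω η δ (k + 1) s)
          (fun s : ℂ => ∑' k : ℕ, coneE0 ω η δ (k + 1) s)
          atTop {s : ℂ | 1 < s.re ∧ s.re < 2} ∧
        MeromorphicOn (F η) Set.univ ∧
        Set.EqOn (F η) (fun s : ℂ => ∑' k : ℕ, coneE0 ω η δ (k + 1) s)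
          {s : ℂ | 1 < s.re ∧ s.re < 2} ∧
        AnalyticAt ℂ (F η) 0) ∧
      Tendsto
        (fun η : ℝ => deriv (F η) 0 -
          (riemannZeta 0 * (Real.log ω : ℂ) - deriv riemannZeta 0 -
            riemannZeta 0 * (Real.log η : ℂ)))
        (nhdsWithin 0 (Set.Ioi 0)) (nhds 0) := by
  obtain ⟨C, hC⟩ := exists_meromorphicOn_hasSum_coneE0 hω hδ0 hδ1
  choose! F hmero hsum han hderiv using hC
  refine ⟨F, fun η hη ↦ ⟨fun s hs ↦ summable_norm_coneE0 hω hη hδ0.le hs.1,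
    (tendstoLocallyUniformlyOn_sum_coneE0 hω hη hδ0.le).mono fun s hs ↦ hs.1,
    hmero η hη, fun s hs ↦ (hsum η hη s hs.1 hs.2).tsum_eq.symm, han η hη⟩,
    tendsto_deriv_zero_sub_of_norm_le hω hderiv⟩

/-- for fixed integer `ω ≥ 1` and `δ ∈ (0,1/8)`, for every `η > 0` the series
`ζ_{E₀}(s) = Σ_{k≥1} E_{0,k}(s)` converges absolutely and locally uniformly on the strip
`1 < Re(s) < 2`, its sum extends to a meromorphic function on `ℂ` holomorphic at `s = 0`, and
the derivative at `0` satisfies `ζ_{E₀}'(0) = ζ(0)·log ω - ζ'(0) - ζ(0)·log η + o(1)` as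
`η → 0⁺`. -/
theorem statement6 (ω : ℕ) (hω : 1 ≤ ω) (δ : ℝ) (hδ0 : 0 < δ) (hδ1 : δ < 1 / 8) :
    ∃ F : ℝ → ℂ → ℂ,
      (∀ η : ℝ, 0 < η →
        (∀ s ∈ {s : ℂ | 1 < s.re ∧ s.re < 2},
          Summable (fun k : ℕ => ‖coneE0 ω η δ (k + 1) s‖)) ∧
        TendstoLocallyUniformlyOn
          (fun (n : ℕ) (s : ℂ) => ∑ k ∈ Finset.range n, coneE0 ω η δ (k + 1) s)
          (fun s : ℂ => ∑' k : ℕ, coneE0 ω η δ (k + 1) s)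
          atTop {s : ℂ | 1 < s.re ∧ s.re < 2} ∧
        MeromorphicOn (F η) Set.univ ∧
        Set.EqOn (F η) (fun s : ℂ => ∑' k : ℕ, coneE0 ω η δ (k + 1) s)
          {s : ℂ | 1 < s.re ∧ s.re < 2} ∧
        AnalyticAt ℂ (F η) 0) ∧
      Tendsto
        (fun η : ℝ => deriv (F η) 0 -
          (riemannZeta 0 * (Real.log ω : ℂ) - deriv riemannZeta 0 -
            riemannZeta 0 * (Real.log η : ℂ)))
        (nhdsWithin 0 (Set.Ioi 0)) (nhds 0) :=
  statement6_general ω hω δ hδ0 (hδ1.trans (by norm_num))
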